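/- arXiv:2107.03956 — 9 statements merged into one kernel-verified Lean document; each statement's English description precedes it below -/
import Mathlib

section
/- Let p be a prime with 61 < p and p ≠ 79, let n ≥ 1 be an integer, let M be a nonsingular n×n matrix over the field F_p, and let c_1,…,c_n, d_1,…,d_n ∈ F_p be arbitrary elements. Then there exists a vector x ∈ F_p^n such that x_i ≠ c_i for every 1 ≤ i ≤ n and (Mx)_i ≠ d_i for every 1 ≤ i ≤ n. -/
/-!
Suppose the hyperplanes `x i = c i` and `(M x) i = d i` cover the space; write them as `a e x = c e`
and pass to a minimal cover `X`. Fix `e ∈ X` and nonzero scalars `k f`. By minimality the product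
over `f ≠ e` of `χ_f - ζ_f`, where `χ_f` is the character of `k f • a f` and `ζ_f` its value on the
`f`-th hyperplane, is a nonzero function supported on the hyperplane of `e`, so multiplication by
the character of `a e` only rescales it. Its Fourier support is therefore invariant under
translation by `a e`; since the support lies among the subset sums of the `k f • a f`, these contain
a full line in direction `a e`.

Comparing two points of that line, the coefficient of `a e` in a linear combination can be made
arbitrary at the cost of changing each other coefficient by `0` or `± k f`. If `S` is a set in
which every element is the midpoint of two others, `k f` can be chosen so that coefficients already
in `S` stay there, and so every vector of the span of `X` has coefficients in `S`. Counting gives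
`p ^ r ≤ |S| ^ |X|` with `r` the rank of `X`, while `|X| ≤ 2 * r` because the coordinate functionals
and the rows of `M` are two independent families. This is absurd once `|S| ^ 2 < p`.
-/

section Characters

open AddChar

variable {G ι : Type*} [AddCommGroup G] [Finite G]

lemma complexBasis_repr_mul_apply_add (β ψ : AddChar G ℂ) (F : G → ℂ) :
    (complexBasis G).repr (β * F) (β + ψ) = (complexBasis G).repr F ψ := by
  suffices h : (complexBasis G).coord (β + ψ) ∘ₗ LinearMap.mulLeft ℂ (β : G → ℂ) =
      (complexBasis G).coord ψ from LinearMap.congr_fun h F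
  classical
  refine (complexBasis G).ext fun χ => ?_
  have h : (β : G → ℂ) * complexBasis G χ = complexBasis G (β + χ) := by
    simp only [complexBasis_apply, coe_add]
  simp only [LinearMap.comp_apply, LinearMap.mulLeft_apply, h, Module.Basis.coord_apply,
    Module.Basis.repr_self, Finsupp.single_apply, add_right_inj]

lemma exists_sum_eq_of_complexBasis_repr_prod_sub_ne_zero {Y : Finset ι} {χ : ι → AddChar G ℂ}
    {ζ : ι → ℂ} {ψ : AddChar G ℂ}
    (h : (complexBasis G).repr (∏ f ∈ Y, (⇑(χ f) - algebraMap ℂ (G → ℂ) (ζ f))) ψ ≠ 0) :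
    ∃ T ⊆ Y, ∑ f ∈ T, χ f = ψ := by
  classical
  have hspan : ∏ f ∈ Y, (⇑(χ f) - algebraMap ℂ (G → ℂ) (ζ f)) ∈
      Submodule.span ℂ (complexBasis G '' {ψ | ∃ T ⊆ Y, ∑ f ∈ T, χ f = ψ}) := by
    simp only [sub_eq_add_neg, Finset.prod_add, ← map_neg, ← map_prod]
    refine Submodule.sum_mem _ fun T hT => ?_
    rw [mul_comm, ← Algebra.smul_def]
    exact Submodule.smul_mem _ _ <| Submodule.subset_span
      ⟨∑ f ∈ T, χ f, ⟨T, Finset.mem_powerset.1 hT, rfl⟩, by rw [complexBasis_apply, coe_sum]⟩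
  exact (complexBasis G).mem_span_image.1 hspan (Finsupp.mem_support_iff.2 h)

theorem exists_sum_eq_nsmul_add_of_forall_apply_eq {Y : Finset ι} {χ : ι → AddChar G ℂ}
    {ζ : ι → ℂ} {β : AddChar G ℂ} {ω : ℂ}
    (hβ : ∀ x, (∀ f ∈ Y, χ f x ≠ ζ f) → β x = ω) (hY : ∃ x, ∀ f ∈ Y, χ f x ≠ ζ f) :
    ∃ ψ, ∀ t : ℕ, ∃ T ⊆ Y, ∑ f ∈ T, χ f = t • β + ψ := by
  set F : G → ℂ := ∏ f ∈ Y, (⇑(χ f) - algebraMap ℂ (G → ℂ) (ζ f)) with hF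
  have hF_ne (x : G) : F x ≠ 0 ↔ ∀ f ∈ Y, χ f x ≠ ζ f := by
    simp [hF, Finset.prod_ne_zero_iff, sub_ne_zero]
  have hβF : ⇑β * F = ω • F := by
    ext x
    by_cases hx : F x = 0
    · simp [hx]
    · simp [hβ x ((hF_ne x).1 hx)]
  have hstep (ψ : AddChar G ℂ) (hψ : (complexBasis G).repr F ψ ≠ 0) :
      (complexBasis G).repr F (β + ψ) ≠ 0 := by
    rw [← complexBasis_repr_mul_apply_add β, hβF, map_smul, Finsupp.smul_apply] at hψ
    exact right_ne_zero_of_mul hψ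
  obtain ⟨ψ, hψ⟩ : ∃ ψ, (complexBasis G).repr F ψ ≠ 0 := by
    obtain ⟨x, hx⟩ := hY
    refine Finsupp.ne_iff.1 ((complexBasis G).repr.map_ne_zero_iff.2 fun h => ?_)
    exact (hF_ne x).2 hx (congrFun h x)
  refine ⟨ψ, fun t => exists_sum_eq_of_complexBasis_repr_prod_sub_ne_zero (ζ := ζ) ?_⟩
  induction t with
  | zero => simpa using hψ
  | succ t ih => simpa only [succ_nsmul', add_assoc] using hstep _ ih

end Characters

section Functionals

variable {N : ℕ} [NeZero N] {V ι : Type*} [AddCommGroup V] [Module (ZMod N) V]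

/-- The embedding of the `ZMod N`-dual of `V` into its complex characters, sending `a` to
`x ↦ exp (2πi a(x) / N)`; characters are written additively. -/
noncomputable def dualToAddChar : Module.Dual (ZMod N) V →+ AddChar V ℂ where
  toFun a := ZMod.stdAddChar.compAddMonoidHom a.toAddMonoidHom
  map_zero' := by ext; simp
  map_add' a b := by ext; simp [AddChar.map_add_eq_mul]

lemma dualToAddChar_apply_eq_stdAddChar_iff {a : Module.Dual (ZMod N) V} {x : V} {c : ZMod N} :
    dualToAddChar a x = ZMod.stdAddChar c ↔ a x = c :=
  ZMod.injective_stdAddChar.eq_iff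

lemma dualToAddChar_injective : Function.Injective (dualToAddChar (N := N) (V := V)) :=
  fun _ _ h => LinearMap.ext fun x =>
    dualToAddChar_apply_eq_stdAddChar_iff.1 (DFunLike.congr_fun h x)

theorem exists_sum_eq_smul_add_of_forall_apply_eq [Finite V] {Y : Finset ι}
    {a : ι → Module.Dual (ZMod N) V} {c : ι → ZMod N} {b : Module.Dual (ZMod N) V} {d : ZMod N}
    (hb : ∀ x, (∀ f ∈ Y, a f x ≠ c f) → b x = d) (hY : ∃ x, ∀ f ∈ Y, a f x ≠ c f) :
    ∃ w, ∀ t : ZMod N, ∃ T ⊆ Y, ∑ f ∈ T, a f = t • b + w := by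
  obtain ⟨ψ, hψ⟩ := exists_sum_eq_nsmul_add_of_forall_apply_eq (Y := Y)
    (χ := fun f => dualToAddChar (a f)) (ζ := fun f => ZMod.stdAddChar (c f))
    (β := dualToAddChar b) (ω := ZMod.stdAddChar d)
    (by simpa only [ne_eq, dualToAddChar_apply_eq_stdAddChar_iff] using hb)
    (by simpa only [ne_eq, dualToAddChar_apply_eq_stdAddChar_iff] using hY)
  obtain ⟨T₀, -, hT₀⟩ := hψ 0
  refine ⟨∑ f ∈ T₀, a f, fun t => ?_⟩
  obtain ⟨T, hTY, hT⟩ := hψ t.val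
  refine ⟨T, hTY, dualToAddChar_injective ?_⟩
  rw [zero_nsmul, zero_add] at hT₀
  rw [← ZMod.natCast_zmod_val t, Nat.cast_smul_eq_nsmul, map_add, map_nsmul, map_sum, map_sum, hT,
    hT₀]

end Functionals

section MidpointBalanced

/-- A finite set in which every element is the midpoint of two elements other than itself.
The equation `x + y = s + s` avoids dividing by two; in a group `x ≠ s` forces `y ≠ s`. -/
def MidpointBalanced {G : Type*} [Add G] (S : Finset G) : Prop :=
  ∀ s ∈ S, ∃ x ∈ S, ∃ y ∈ S, x ≠ s ∧ x + y = s + s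

instance {G : Type*} [Add G] [DecidableEq G] (S : Finset G) : Decidable (MidpointBalanced S) :=
  inferInstanceAs (Decidable (∀ s ∈ S, ∃ x ∈ S, ∃ y ∈ S, x ≠ s ∧ x + y = s + s))

lemma MidpointBalanced.exists_ne_zero {G : Type*} [AddCommGroup G] {S : Finset G}
    (hS : MidpointBalanced S) {s : G} (hs : s ∈ S) : ∃ k ≠ 0, s + k ∈ S ∧ s - k ∈ S := by
  obtain ⟨x, hx, y, hy, hxs, hxy⟩ := hS s hs
  refine ⟨x - s, sub_ne_zero.2 hxs, by rwa [add_sub_cancel], ?_⟩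
  rwa [sub_sub_eq_add_sub, ← hxy, add_sub_cancel_left]

end MidpointBalanced

section HyperplaneCover

/-- The affine hyperplanes `a e = c e` with `e ∈ X` cover the whole space. -/
def IsHyperplaneCover {K V ι : Type*} [CommSemiring K] [AddCommMonoid V] [Module K V]
    (a : ι → Module.Dual K V) (c : ι → K) (X : Finset ι) : Prop :=
  ∀ x, ∃ e ∈ X, a e x = c e

variable {p : ℕ} [Fact p.Prime] {V ι : Type*} [AddCommGroup V] [Module (ZMod p) V] [Finite V]
  {a : ι → Module.Dual (ZMod p) V} {c : ι → ZMod p} {X : Finset ι} {S : Finset (ZMod p)}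

lemma IsHyperplaneCover.exists_sum_smul_eq_smul_add [DecidableEq ι]
    (hX : Minimal (IsHyperplaneCover a c) X) {e : ι} (he : e ∈ X) {k : ι → ZMod p}
    (hk : ∀ f, k f ≠ 0) :
    ∃ w, ∀ t : ZMod p, ∃ T ⊆ X.erase e, ∑ f ∈ T, k f • a f = t • a e + w := by
  have hmul (f : ι) (x : V) : (k f • a f) x ≠ k f * c f ↔ a f x ≠ c f := by
    rw [LinearMap.smul_apply, smul_eq_mul, Ne, mul_right_inj' (hk f)]
  refine exists_sum_eq_smul_add_of_forall_apply_eq (c := fun f => k f * c f) (d := c e) ?_ ?_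
  · intro x hx
    obtain ⟨f, hf, hfx⟩ := hX.prop x
    by_contra hex
    have hfe : f ≠ e := fun h => hex (h ▸ hfx)
    exact (hmul f x).1 (hx f (Finset.mem_erase.2 ⟨hfe, hf⟩)) hfx
  · have hnot := hX.not_prop_of_lt (Finset.erase_ssubset he)
    simpa only [IsHyperplaneCover, hmul, not_forall, not_exists, not_and] using hnot

lemma IsHyperplaneCover.exists_coeff_eq_and_sum_smul_eq
    (hX : Minimal (IsHyperplaneCover a c) X) (hS : MidpointBalanced S) {e : ι} (he : e ∈ X)
    (s : ι → ZMod p) (r : ZMod p) :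
    ∃ s' : ι → ZMod p, s' e = r ∧ (∀ f ≠ e, s f ∈ S → s' f ∈ S) ∧
      ∑ f ∈ X, s' f • a f = ∑ f ∈ X, s f • a f := by
  classical
  have hstep (f : ι) : ∃ k ≠ 0, s f ∈ S → s f + k ∈ S ∧ s f - k ∈ S := by
    by_cases hf : s f ∈ S
    · obtain ⟨k, hk, hkS⟩ := hS.exists_ne_zero hf
      exact ⟨k, hk, fun _ => hkS⟩
    · exact ⟨1, one_ne_zero, fun h => absurd h hf⟩
  choose k hk hkS using hstep
  obtain ⟨w, hw⟩ := IsHyperplaneCover.exists_sum_smul_eq_smul_add hX he hk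
  obtain ⟨T₀, hT₀, hsum₀⟩ := hw 0
  obtain ⟨T₁, hT₁, hsum₁⟩ := hw (s e - r)
  have heT {T : Finset ι} (hT : T ⊆ X.erase e) : e ∉ T := fun h => Finset.notMem_erase e X (hT h)
  have hXT {T : Finset ι} (hT : T ⊆ X.erase e) : X ∩ T = T :=
    Finset.inter_eq_right.2 (hT.trans (Finset.erase_subset e X))
  refine ⟨fun f => s f + (if f ∈ T₁ then k f else 0) - (if f ∈ T₀ then k f else 0) +
    (if f = e then r - s e else 0), ?_, fun f hf hfS => ?_, ?_⟩
  · simp [heT hT₀, heT hT₁]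
  · obtain ⟨hadd, hsub⟩ := hkS f hfS
    by_cases h₁ : f ∈ T₁ <;> by_cases h₀ : f ∈ T₀ <;> simp [hf, h₀, h₁, hfS, hadd, hsub]
  · simp only [add_smul, sub_smul, ite_smul, zero_smul, Finset.sum_add_distrib,
      Finset.sum_sub_distrib, Finset.sum_ite_mem, Finset.sum_ite_eq', hXT hT₀, hXT hT₁, hsum₀,
      hsum₁, if_pos he]
    module

lemma IsHyperplaneCover.exists_coeff_mem_and_sum_smul_eq
    (hX : Minimal (IsHyperplaneCover a c) X) (hS : MidpointBalanced S) (hne : S.Nonempty)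
    (s : ι → ZMod p) :
    ∃ s' : ι → ZMod p, (∀ e ∈ X, s' e ∈ S) ∧ ∑ e ∈ X, s' e • a e = ∑ e ∈ X, s e • a e := by
  classical
  obtain ⟨r, hr⟩ := hne
  suffices h : ∀ Y ⊆ X, ∃ s' : ι → ZMod p, (∀ e ∈ Y, s' e ∈ S) ∧
      ∑ e ∈ X, s' e • a e = ∑ e ∈ X, s e • a e from h X subset_rfl
  intro Y
  induction Y using Finset.induction_on with
  | empty => exact fun _ => ⟨s, by simp, rfl⟩
  | insert e Y _ ih =>
    intro hY
    obtain ⟨heX, hYX⟩ := Finset.insert_subset_iff.1 hY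
    obtain ⟨s₁, hs₁, hsum₁⟩ := ih hYX
    obtain ⟨s₂, hs₂e, hs₂, hsum₂⟩ :=
      IsHyperplaneCover.exists_coeff_eq_and_sum_smul_eq hX hS heX s₁ r
    refine ⟨s₂, fun f hf => ?_, hsum₂.trans hsum₁⟩
    obtain rfl | hfe := eq_or_ne f e
    · exact hs₂e ▸ hr
    · exact hs₂ f hfe (hs₁ f (Finset.mem_of_mem_insert_of_ne hf hfe))

end HyperplaneCover

section Counting

variable {K V ι κ : Type*} [Field K] [AddCommGroup V] [Module K V]

lemma natCard_pow_finrank_le_card_pow [FiniteDimensional K V] {v : ι → V} {X : Finset ι}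
    {S : Finset K} {W : Submodule K V}
    (h : ∀ w ∈ W, ∃ s : ι → K, (∀ e ∈ X, s e ∈ S) ∧ ∑ e ∈ X, s e • v e = w) :
    Nat.card K ^ Module.finrank K W ≤ S.card ^ X.card := by
  choose s hsS hsum using fun w : W => h w w.2
  let code (w : W) (e : X) : S := ⟨s w e, hsS w e e.2⟩
  have hcode : Function.Injective code := fun w w' hww' => Subtype.ext <| by
    rw [← hsum w, ← hsum w']
    refine Finset.sum_congr rfl fun e he => ?_
    rw [show s w e = s w' e from congrArg Subtype.val (congrFun hww' ⟨e, he⟩)]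
  calc Nat.card K ^ Module.finrank K W = Nat.card W := Module.natCard_eq_pow_finrank.symm
    _ ≤ Nat.card (X → S) := Nat.card_le_card_of_injective code hcode
    _ = S.card ^ X.card := by
      rw [Nat.card_fun, Nat.card_eq_finsetCard, Nat.card_eq_finsetCard]

lemma card_le_finrank_of_linearIndependent_of_mem [FiniteDimensional K V] {v : ι → V}
    (hv : LinearIndependent K v) {X : Finset ι} {W : Submodule K V} (hW : ∀ i ∈ X, v i ∈ W) :
    X.card ≤ Module.finrank K W := by
  have hX : LinearIndependent K fun i : X => (⟨v i, hW i i.2⟩ : W) :=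
    .of_comp W.subtype (hv.comp _ Subtype.val_injective)
  simpa using hX.fintype_card_le_finrank

lemma card_le_two_mul_finrank_span_image_sumElim [FiniteDimensional K V] {v : ι → V} {w : κ → V}
    (hv : LinearIndependent K v) (hw : LinearIndependent K w) (X : Finset (ι ⊕ κ)) :
    X.card ≤ 2 * Module.finrank K (Submodule.span K (Sum.elim v w '' X)) := by
  set W := Submodule.span K (Sum.elim v w '' X)
  have hleft : X.toLeft.card ≤ Module.finrank K W :=
    card_le_finrank_of_linearIndependent_of_mem hv fun i hi =>
      Submodule.subset_span ⟨Sum.inl i, Finset.mem_toLeft.1 hi, rfl⟩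
  have hright : X.toRight.card ≤ Module.finrank K W :=
    card_le_finrank_of_linearIndependent_of_mem hw fun j hj =>
      Submodule.subset_span ⟨Sum.inr j, Finset.mem_toRight.1 hj, rfl⟩
  rw [← Finset.card_toLeft_add_card_toRight, two_mul]
  exact Nat.add_le_add hleft hright

theorem exists_forall_apply_ne_of_card_le_mul_finrank {p : ℕ} [Fact p.Prime] {V : Type*}
    [AddCommGroup V] [Module (ZMod p) V] [Finite V] [Finite ι] {S : Finset (ZMod p)}
    (hS : MidpointBalanced S) (hne : S.Nonempty) {l : ℕ} (hcard : S.card ^ l < p)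
    {a : ι → Module.Dual (ZMod p) V} (c : ι → ZMod p)
    (ha : ∀ X : Finset ι, X.card ≤ l * Module.finrank (ZMod p) (Submodule.span (ZMod p) (a '' X))) :
    ∃ x, ∀ e, a e x ≠ c e := by
  by_contra! hcov
  have := Fintype.ofFinite ι
  obtain ⟨X, hX⟩ := exists_minimal_of_wellFoundedLT (IsHyperplaneCover a c)
    ⟨Finset.univ, fun x => by simpa using hcov x⟩
  set W := Submodule.span (ZMod p) (a '' X)
  set r := Module.finrank (ZMod p) W
  have hcount : p ^ r ≤ S.card ^ X.card := by
    suffices h : Nat.card (ZMod p) ^ r ≤ S.card ^ X.card by rwa [Nat.card_zmod] at h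
    refine natCard_pow_finrank_le_card_pow (v := a) fun w hw => ?_
    obtain ⟨s, -, rfl⟩ := Submodule.mem_span_image_finset_iff_exists_fun' (ZMod p) |>.1 hw
    exact IsHyperplaneCover.exists_coeff_mem_and_sum_smul_eq hX hS hne s
  have hr : r ≠ 0 := by
    obtain ⟨e, he, -⟩ := hX.prop 0
    have := (Finset.card_pos.2 ⟨e, he⟩).trans_le (ha X)
    exact (pos_of_mul_pos_right this zero_le).ne'
  have hlt : S.card ^ X.card < p ^ r := calc
    S.card ^ X.card ≤ S.card ^ (l * r) := Nat.pow_le_pow_right hne.card_pos (ha X)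
    _ = (S.card ^ l) ^ r := pow_mul _ _ _
    _ < p ^ r := Nat.pow_lt_pow_left hcard hr
  exact hlt.not_ge hcount

end Counting

section HalvingSet

/-- The residues `0` and `±⌊N / 2 ^ j⌋` for `1 ≤ j ≤ log₂ N`, a midpoint-balanced set of
logarithmic size: `2 * ⌊m / 2⌋` is `m` or `m - 1`, and `N` itself is the residue `0`. -/
def halvingSet (N : ℕ) : Finset (ZMod N) :=
  insert 0 <| Finset.image₂ (fun ε j => ε * ((N / 2 ^ j : ℕ) : ZMod N)) {1, -1}
    (Finset.Icc 1 (Nat.log 2 N))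

lemma card_halvingSet_le (N : ℕ) : (halvingSet N).card ≤ 2 * Nat.log 2 N + 1 := by
  refine (Finset.card_insert_le _ _).trans (Nat.succ_le_succ ?_)
  refine (Finset.card_image₂_le _ _ _).trans ?_
  rw [Nat.card_Icc, Nat.add_sub_cancel]
  exact Nat.mul_le_mul_right _ Finset.card_le_two

lemma mul_natCast_div_two_pow_mem_halvingSet {N j : ℕ} {ε : ZMod N} (hε : ε = 1 ∨ ε = -1)
    (hj : j ≤ Nat.log 2 N) : ε * ((N / 2 ^ j : ℕ) : ZMod N) ∈ halvingSet N := by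
  obtain rfl | hj₀ := Nat.eq_zero_or_pos j
  · simp [halvingSet]
  · exact Finset.mem_insert_of_mem <|
      Finset.mem_image₂_of_mem (by simpa using hε) (Finset.mem_Icc.2 ⟨hj₀, hj⟩)

lemma mem_halvingSet_of_eq_one_or_eq_neg_one {N : ℕ} (hN : N ≠ 0) {ε : ZMod N}
    (hε : ε = 1 ∨ ε = -1) : ε ∈ halvingSet N := by
  have hlog : N / 2 ^ Nat.log 2 N = 1 :=
    Nat.div_eq_of_lt_le (by simpa using Nat.pow_log_le_self 2 hN)
      (by simpa [pow_succ, mul_comm] using Nat.lt_pow_succ_log_self one_lt_two N)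
  simpa [hlog] using mul_natCast_div_two_pow_mem_halvingSet hε le_rfl

lemma natCast_div_two_pow_ne_natCast_div_two_pow_succ {N j : ℕ} (hj : j < Nat.log 2 N) :
    ((N / 2 ^ j : ℕ) : ZMod N) ≠ ((N / 2 ^ (j + 1) : ℕ) : ZMod N) := by
  have hN : N ≠ 0 := by rintro rfl; simp at hj
  have hpos : 0 < N / 2 ^ (j + 1) :=
    Nat.div_pos ((Nat.pow_le_pow_right two_pos hj).trans (Nat.pow_log_le_self 2 hN)) (by positivity)
  have hlt : N / 2 ^ (j + 1) < N := Nat.div_lt_self (Nat.pos_of_ne_zero hN) (by simp)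
  rw [Ne, ZMod.natCast_eq_natCast_iff', Nat.mod_eq_of_lt hlt]
  obtain rfl | hj₀ := eq_or_ne j 0
  · simpa using hpos.ne
  · rw [Nat.mod_eq_of_lt (Nat.div_lt_self (Nat.pos_of_ne_zero hN) (Nat.one_lt_two_pow hj₀))]
    rw [pow_succ, ← Nat.div_div_eq_div_mul] at hpos ⊢
    omega

theorem midpointBalanced_halvingSet {N : ℕ} (hN : 1 < N) : MidpointBalanced (halvingSet N) := by
  have : Fact (1 < N) := ⟨hN⟩
  have hone {ε : ZMod N} (hε : ε = 1 ∨ ε = -1) : ε ∈ halvingSet N :=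
    mem_halvingSet_of_eq_one_or_eq_neg_one (by omega) hε
  intro s hs
  obtain rfl | hs := Finset.mem_insert.1 hs
  · exact ⟨1, hone (.inl rfl), -1, hone (.inr rfl), one_ne_zero, by ring⟩
  obtain ⟨ε, hε, j, hj, rfl⟩ := Finset.mem_image₂.1 hs
  replace hε : ε = 1 ∨ ε = -1 := by simpa using hε
  obtain ⟨hj₁, hjN⟩ := Finset.mem_Icc.1 hj
  obtain ⟨i, rfl⟩ := Nat.exists_eq_add_of_le' hj₁
  set m := N / 2 ^ i
  have hm : ((m : ℕ) : ZMod N) = 2 * ((N / 2 ^ (i + 1) : ℕ) : ZMod N) + ((m % 2 : ℕ) : ZMod N) := by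
    rw [pow_succ, ← Nat.div_div_eq_div_mul]
    exact_mod_cast congrArg (Nat.cast (R := ZMod N)) (Nat.div_add_mod m 2).symm
  refine ⟨ε * m, mul_natCast_div_two_pow_mem_halvingSet hε (by omega),
    -ε * (m % 2 : ℕ), ?_, ?_, by rw [hm]; ring⟩
  · obtain h | h := Nat.mod_two_eq_zero_or_one m
    · simp [h, halvingSet]
    · simpa [h] using hone (ε := -ε) (by rcases hε with rfl | rfl <;> simp)
  · have hεu : IsUnit ε := by rcases hε with rfl | rfl <;> simp
    exact hεu.mul_right_injective.ne (natCast_div_two_pow_ne_natCast_div_two_pow_succ hjN)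

end HalvingSet

section SmallPrimes

/-- Midpoint-balanced sets of fewer than `√p` residues, found by computer search, for the primes
`p > 61` other than `79` at which `halvingSet p` is too large. -/
def smallBalancedSets : List (Σ p : ℕ, Finset (ZMod p)) := [
  ⟨67, {0, 1, 16, 24, 32, 45, 64, 66}⟩,
  ⟨71, {0, 1, 2, 28, 32, 36, 43, 54}⟩,
  ⟨73, {0, 1, 18, 31, 36, 44, 70, 72}⟩,
  ⟨83, {0, 1, 2, 4, 15, 29, 40, 43, 51}⟩,
  ⟨89, {0, 1, 2, 10, 14, 18, 23, 46, 79}⟩,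
  ⟨97, {0, 1, 13, 40, 44, 48, 55, 79, 96}⟩,
  ⟨101, {0, 1, 2, 5, 32, 52, 59, 66, 67, 100}⟩,
  ⟨103, {0, 1, 6, 11, 19, 21, 38, 65, 80, 84}⟩,
  ⟨107, {0, 1, 3, 6, 14, 46, 57, 89, 105, 106}⟩,
  ⟨109, {0, 1, 2, 5, 10, 20, 41, 80, 97, 108}⟩,
  ⟨113, {0, 1, 39, 44, 72, 76, 78, 96, 105, 112}⟩,
  ⟨127, {0, 1, 2, 4, 8, 20, 38, 63, 68, 105, 126}⟩,
  ⟨131, {0, 1, 21, 42, 57, 72, 76, 83, 87, 94, 130}⟩,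
  ⟨137, {0, 1, 11, 21, 43, 60, 75, 79, 90, 120, 136}⟩,
  ⟨139, {0, 1, 25, 42, 50, 88, 95, 97, 99, 103, 126}⟩,
  ⟨149, {0, 1, 2, 7, 12, 16, 23, 44, 81, 137}⟩,
  ⟨151, {0, 1, 3, 7, 12, 24, 49, 82, 95, 141, 146, 150}⟩,
  ⟨157, {0, 1, 2, 7, 13, 27, 47, 92, 124, 144, 154, 156}⟩,
  ⟨163, {0, 1, 3, 8, 62, 77, 117, 124, 151, 157, 161, 162}⟩,
  ⟨167, {0, 1, 3, 7, 14, 27, 55, 96, 159, 163, 165, 166}⟩,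
  ⟨173, {0, 1, 4, 10, 22, 56, 87, 124, 149, 161, 169, 171}⟩,
  ⟨179, {0, 1, 2, 49, 98, 112, 114, 134, 147, 170, 175, 178}⟩,
  ⟨181, {0, 1, 22, 79, 81, 83, 87, 102, 142, 152, 157, 162}⟩,
  ⟨191, {0, 1, 2, 5, 11, 17, 35, 59, 70, 105, 113, 130, 190}⟩,
  ⟨193, {0, 1, 15, 17, 33, 51, 69, 105, 107, 116, 163, 178}⟩,
  ⟨197, {0, 1, 2, 4, 6, 12, 27, 102, 149, 175, 192, 194, 195, 196}⟩,
  ⟨199, {0, 1, 30, 62, 85, 125, 130, 165, 171, 177, 197, 198}⟩,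
  ⟨211, {0, 1, 49, 64, 68, 113, 128, 138, 151, 162, 164, 188, 196}⟩,
  ⟨223, {0, 1, 14, 33, 52, 116, 155, 189, 194, 199, 209, 211}⟩,
  ⟨257, {0, 1, 14, 60, 117, 136, 171, 205, 225, 233, 239, 241, 243, 245}⟩,
  ⟨263, {0, 1, 3, 5, 9, 22, 25, 45, 63, 81, 163, 174, 250, 256, 262}⟩,
  ⟨269, {0, 1, 2, 4, 9, 64, 129, 176, 223, 248, 258, 268}⟩,
  ⟨271, {0, 1, 7, 13, 37, 73, 133, 136, 200, 236, 260, 262, 264, 266}⟩,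
  ⟨277, {0, 1, 3, 5, 10, 17, 37, 69, 145, 216, 246, 270, 274, 276}⟩,
  ⟨281, {0, 1, 2, 5, 11, 23, 117, 128, 199, 238, 260, 271, 277, 280}⟩,
  ⟨283, {0, 1, 3, 11, 23, 71, 142, 218, 238, 258, 272, 278, 282}⟩]

lemma midpointBalanced_of_mem_smallBalancedSets : ∀ q ∈ smallBalancedSets,
    MidpointBalanced q.2 ∧ q.2.Nonempty ∧ q.2.card ^ 2 < q.1 := by
  decide +kernel

lemma sq_two_mul_log_add_one_lt {n : ℕ} (hn : 289 < n) : (2 * Nat.log 2 n + 1) ^ 2 < n := by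
  have hpow : ∀ k ≥ 9, (2 * k + 1) ^ 2 < 2 ^ k := by
    intro k hk
    induction k, hk using Nat.le_induction with
    | base => norm_num
    | succ k hk ih => rw [pow_succ 2]; nlinarith
  obtain hlog | hlog := le_or_gt (Nat.log 2 n) 8
  · exact (Nat.pow_le_pow_left (by omega : _ ≤ 17) 2).trans_lt hn
  · exact (hpow _ hlog).trans_le (Nat.pow_log_le_self 2 (by omega))

lemma mem_smallBalancedSets_of_le_sq_log {p : ℕ} (hp : p.Prime) (hp61 : 61 < p) (hp79 : p ≠ 79)
    (hlog : p ≤ (2 * Nat.log 2 p + 1) ^ 2) : p ∈ smallBalancedSets.map Sigma.fst := by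
  have hp289 : p < 290 :=
    Nat.lt_succ_of_le <| not_lt.1 fun h => (sq_two_mul_log_add_one_lt h).not_ge hlog
  have htable : ∀ q < 290, q.Prime ∧ 61 < q ∧ q ≠ 79 ∧ q ≤ (2 * Nat.log 2 q + 1) ^ 2 →
      q ∈ smallBalancedSets.map Sigma.fst := by
    decide +kernel
  exact htable p hp289 ⟨hp, hp61, hp79, hlog⟩

theorem exists_midpointBalanced_card_sq_lt {p : ℕ} (hp : p.Prime) (hp61 : 61 < p) (hp79 : p ≠ 79) :
    ∃ S : Finset (ZMod p), MidpointBalanced S ∧ S.Nonempty ∧ S.card ^ 2 < p := by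
  obtain hlog | hlog := lt_or_ge ((2 * Nat.log 2 p + 1) ^ 2) p
  · exact ⟨halvingSet p, midpointBalanced_halvingSet hp.one_lt, Finset.insert_nonempty _ _,
      (Nat.pow_le_pow_left (card_halvingSet_le p) 2).trans_lt hlog⟩
  · obtain ⟨q, hq, rfl⟩ := List.mem_map.1 (mem_smallBalancedSets_of_le_sq_log hp hp61 hp79 hlog)
    exact ⟨q.2, midpointBalanced_of_mem_smallBalancedSets q hq⟩

end SmallPrimes

theorem stmt_0_general {p : ℕ} [Fact p.Prime] (hp61 : 61 < p) (hp79 : p ≠ 79) {V ι κ : Type*}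
    [AddCommGroup V] [Module (ZMod p) V] [Finite V]
    {a : ι → Module.Dual (ZMod p) V} {b : κ → Module.Dual (ZMod p) V}
    (ha : LinearIndependent (ZMod p) a) (hb : LinearIndependent (ZMod p) b)
    (c : ι → ZMod p) (d : κ → ZMod p) :
    ∃ x, (∀ i, a i x ≠ c i) ∧ ∀ j, b j x ≠ d j := by
  have := ha.finite
  have := hb.finite
  obtain ⟨S, hS, hne, hcard⟩ := exists_midpointBalanced_card_sq_lt Fact.out hp61 hp79
  obtain ⟨x, hx⟩ := exists_forall_apply_ne_of_card_le_mul_finrank hS hne hcard (Sum.elim c d)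
    (card_le_two_mul_finrank_span_image_sumElim ha hb)
  exact ⟨x, fun i => hx (.inl i), fun j => hx (.inr j)⟩

lemma linearIndependent_dotProductEquiv {R m n : Type*} [CommRing R] [Fintype n] [DecidableEq n]
    {v : m → n → R} (hv : LinearIndependent R v) :
    LinearIndependent R fun i => dotProductEquiv R n (v i) :=
  hv.map' (dotProductEquiv R n).toLinearMap (dotProductEquiv R n).ker

/-- **Theorem A** (Alon–Jaeger–Tarsi for large primes).
Let `p` be a prime with `61 < p` and `p ≠ 79`, `n ≥ 1`, `M` a nonsingular `n × n` matrix
over `F_p`, and `c, d : Fin n → ZMod p`. Then there is `x` with `x i ≠ c i` and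
`(M x) i ≠ d i` for every `i`. -/
theorem stmt_0 (p : ℕ) (hp : p.Prime) (hp61 : 61 < p) (hp79 : p ≠ 79)
    (n : ℕ) (hn : 1 ≤ n)
    (M : Matrix (Fin n) (Fin n) (ZMod p)) (hM : IsUnit M.det)
    (c d : Fin n → ZMod p) :
    ∃ x : Fin n → ZMod p, (∀ i, x i ≠ c i) ∧ (∀ i, M.mulVec x i ≠ d i) := by
  have : Fact p.Prime := ⟨hp⟩
  have hcoord := linearIndependent_dotProductEquiv
    (Pi.linearIndependent_single_one (Fin n) (ZMod p))
  have hrows := linearIndependent_dotProductEquiv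
    (Matrix.linearIndependent_rows_of_isUnit ((Matrix.isUnit_iff_isUnit_det M).2 hM))
  obtain ⟨x, hx, hMx⟩ := stmt_0_general hp61 hp79 hcoord hrows c d
  exact ⟨x, by simpa using hx, hMx⟩
end

section
/- Let p > 3 be a prime. Assume that for every integer n ≥ 1 and every nonsingular n×n matrix M over F_p with row vectors a_1,…,a_n, the identity ∏_{i=1}^n (1 − g^{e_i}) · ∏_{i=1}^n (1 − g^{a_i}) = 0 in the group algebra F_p[F_p^n] implies the identity ∏_{i=1}^n (1 − g^{e_i}) · ∏_{i=1}^n (1 − g^{a_i}) = 0 in the group algebra ℤ[F_p^n]. Then for every integer n ≥ 1 and every nonsingular n×n matrix M over F_p there exists a vector x ∈ F_p^n such that x_i ≠ 0 for every 1 ≤ i ≤ n and (Mx)_i ≠ 0 for every 1 ≤ i ≤ n. -/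
/-!
Let `E` be the product of the `1 - g ^ e i` and `A` that of the `1 - g ^ a i`. Evaluating at the
characters `g ^ v ↦ ψ (v ⬝ᵥ x)` shows that `E * A ≠ 0` over `ℤ` if and only if some nowhere zero `x`
has `M *ᵥ x` nowhere zero. Suppose there is no such `x`, and choose a nowhere zero `x` for which the
support of `M *ᵥ x` is maximal. Take `m` copies of `M`, adjoin one new coordinate `s`, and add `s`
to every row of every copy on which `M *ᵥ x` vanishes. Then `x` in each copy together with `s = 1`
shows that the new product is nonzero over `ℤ`. By maximality, however, an altered row may be
replaced by `s` alone in the product, so each copy contributes a factor `1 - g ^ s`; and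
for large `m` the power `(1 - g ^ s) ^ m` vanishes over any ring in which `p` is nilpotent.
-/

open AddMonoidAlgebra Function
open Matrix hiding single
open Sum (inl inr)

section NilpotentPrime

variable {A : Type*} [CommRing A] {p : ℕ}

theorem one_sub_pow_prime_pow_mul_eq_zero (hp : p.Prime) {x : A} {k m : ℕ}
    (hx : x ^ p ^ k = 1) (hpm : (p : A) ^ m = 0) : (1 - x) ^ (p ^ k * m) = 0 := by
  obtain ⟨r, hr⟩ := exists_add_pow_prime_pow_eq hp (1 - x) x k
  have h_mul : (1 - x) ^ p ^ k = p * -((1 - x) * x * r) := by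
    rw [sub_add_cancel, one_pow, hx] at hr
    linear_combination -hr
  rw [pow_mul, h_mul, mul_pow, hpm, zero_mul]

theorem exists_one_sub_single_pow_eq_zero {q : ℕ} {R : Type*} [CommRing R] (hq : IsPrimePow q)
    (hR : IsNilpotent (q : R)) :
    ∃ m, ∀ {G : Type*} [AddCommGroup G] (s : G), q • s = 0 →
      (1 - single s 1 : R[G]) ^ m = 0 := by
  obtain ⟨p, k, hp, -, rfl⟩ := (isPrimePow_nat_iff q).1 hq
  obtain ⟨m, hm⟩ := hR
  refine ⟨p ^ k * (k * m), fun {G} _ s hs => one_sub_pow_prime_pow_mul_eq_zero hp ?_ ?_⟩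
  · rw [single_pow, hs, one_pow, one_def]
  · rw [Nat.cast_pow, ← pow_mul] at hm
    rw [← map_natCast (algebraMap R R[G]), ← map_pow, hm, map_zero]

end NilpotentPrime

section Characters

variable {q : ℕ} [NeZero q] {ι : Type*} [Fintype ι]

/-- The additive character `x ↦ ψ (v ⬝ᵥ x)` of `(ℤ/q)^ι`, where `ψ` is the standard character
`j ↦ exp (2πij / q)` of `ℤ/q`. -/
noncomputable def dotChar (v : ι → ZMod q) : AddChar (ι → ZMod q) ℂ where
  toFun x := ZMod.stdAddChar (v ⬝ᵥ x)
  map_zero_eq_one' := by simp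
  map_add_eq_mul' x y := by rw [dotProduct_add, AddChar.map_add_eq_mul]

theorem dotChar_apply (v x : ι → ZMod q) : dotChar v x = ZMod.stdAddChar (v ⬝ᵥ x) := rfl

theorem dotChar_comm (v x : ι → ZMod q) : dotChar v x = dotChar x v := by
  rw [dotChar_apply, dotChar_apply, dotProduct_comm]

theorem dotChar_eq_one_iff {v x : ι → ZMod q} : dotChar v x = 1 ↔ v ⬝ᵥ x = 0 := by
  rw [dotChar_apply, ← AddChar.map_zero_eq_one (ZMod.stdAddChar (N := q)),
    ZMod.injective_stdAddChar.eq_iff]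

theorem dotChar_injective : Injective (dotChar : (ι → ZMod q) → AddChar (ι → ZMod q) ℂ) := by
  classical
  intro v w h
  ext i : 1
  have hi : ZMod.stdAddChar (v ⬝ᵥ Pi.single i 1) = ZMod.stdAddChar (w ⬝ᵥ Pi.single i 1) :=
    DFunLike.congr_fun h (Pi.single i 1)
  simpa using ZMod.injective_stdAddChar hi

/-- Evaluation of the integral group algebra of `(ℤ/q)^ι` at the character `dotChar x`. -/
noncomputable def charEval (x : ι → ZMod q) : ℤ[ι → ZMod q] →ₐ[ℤ] ℂ :=
  lift ℤ ℂ (ι → ZMod q) (dotChar x).toMonoidHom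

theorem charEval_one_sub_single_eq_zero_iff {x v : ι → ZMod q} :
    charEval x (1 - single v 1) = 0 ↔ v ⬝ᵥ x = 0 := by
  rw [← dotChar_eq_one_iff, dotChar_comm, map_sub, map_one, sub_eq_zero, eq_comm]
  simp [charEval]

theorem charEval_ext {f g : ℤ[ι → ZMod q]} (h : ∀ x, charEval x f = charEval x g) : f = g := by
  classical
  have h_indep : LinearIndependent ℂ fun v : ι → ZMod q => (dotChar v : (ι → ZMod q) → ℂ) :=
    (AddChar.linearIndependent (ι → ZMod q) ℂ).comp dotChar dotChar_injective
  have h_sum (x : ι → ZMod q) (f : ℤ[ι → ZMod q]) :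
      charEval x f = ∑ v, (f.coeff v : ℂ) * dotChar v x := by
    rw [charEval, lift_apply, Finsupp.sum_fintype _ _ (by simp)]
    simp [dotChar_comm x]
  ext v
  have hv := Fintype.linearIndependent_iff.1 h_indep (fun v => (f.coeff v : ℂ) - g.coeff v) (by
    ext x
    simpa [sub_mul, h_sum, sub_eq_zero] using h x) v
  exact_mod_cast sub_eq_zero.1 hv

theorem mul_one_sub_single_congr {f : ℤ[ι → ZMod q]} {v w : ι → ZMod q}
    (h : ∀ x, charEval x f ≠ 0 → v ⬝ᵥ x = w ⬝ᵥ x) :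
    f * (1 - single v 1) = f * (1 - single w 1) := by
  refine charEval_ext fun x => ?_
  by_cases hf : charEval x f = 0
  · rw [map_mul, map_mul, hf, zero_mul, zero_mul]
  · have hvw : charEval x (single v 1) = charEval x (single w 1) := by
      simp [charEval, dotChar_apply, dotProduct_comm x, h x hf]
    simp only [map_mul, map_sub, hvw]

end Characters

section CoordRowProd

variable {q : ℕ} {ι κ : Type*} [Fintype ι] [DecidableEq ι] [Fintype κ]

/-- The product `∏ (1 - g ^ e i) * ∏ (1 - g ^ a k)` in `R[(ℤ/q)^ι]`, where the `e i` are the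
standard basis vectors and the `a k` are the rows of `M`. -/
noncomputable def coordRowProd (R : Type*) [CommRing R] (M : Matrix κ ι (ZMod q)) :
    R[ι → ZMod q] :=
  (∏ i : ι, (1 - single (Pi.single i 1) 1)) * ∏ k : κ, (1 - single (M.row k) 1)

theorem coordRowProd_int_ne_zero_iff [NeZero q] {M : Matrix κ ι (ZMod q)} :
    coordRowProd ℤ M ≠ 0 ↔ ∃ x : ι → ZMod q, (∀ i, x i ≠ 0) ∧ ∀ k, M.row k ⬝ᵥ x ≠ 0 := by
  have h_eval (x : ι → ZMod q) : charEval x (coordRowProd ℤ M) ≠ 0 ↔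
      (∀ i, x i ≠ 0) ∧ ∀ k, M.row k ⬝ᵥ x ≠ 0 := by
    simp only [coordRowProd, map_mul, map_prod, mul_ne_zero_iff, Finset.prod_ne_zero_iff,
      Finset.mem_univ, forall_const, ne_eq, charEval_one_sub_single_eq_zero_iff,
      single_one_dotProduct]
  simp only [← h_eval]
  refine ⟨fun h => ?_, fun ⟨x, hx⟩ h => hx (by rw [h, map_zero])⟩
  contrapose! h
  exact charEval_ext fun x => by rw [h, map_zero]

variable {R S : Type*} [CommRing R] [CommRing S]

theorem map_coordRowProd (f : R →+* S) (M : Matrix κ ι (ZMod q)) :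
    mapRingHom (ι → ZMod q) f (coordRowProd R M) = coordRowProd S M := by
  simp [coordRowProd]

theorem coordRowProd_submatrix_equiv_eq_zero_iff [DecidableEq κ] (e : κ ≃ ι)
    (M : Matrix ι ι (ZMod q)) : coordRowProd R (M.submatrix e e) = 0 ↔ coordRowProd R M = 0 := by
  let reindex : R[ι → ZMod q] ≃ₐ[R] R[κ → ZMod q] :=
    domCongr R R (LinearEquiv.funCongrLeft (ZMod q) (ZMod q) e).toAddEquiv
  have h_map : coordRowProd R (M.submatrix e e) = reindex (coordRowProd R M) := by
    simp only [coordRowProd, map_mul, map_prod, map_sub, map_one]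
    rw [← e.prod_comp, ← e.prod_comp]
    have h_single (v : ι → ZMod q) : reindex (single v 1) = single (v ∘ e) 1 :=
      domCongr_single ..
    simp only [h_single, Pi.single_comp_equiv, Equiv.symm_apply_apply, row_submatrix_eq_comp]
  rw [h_map, EmbeddingLike.map_eq_zero_iff]

end CoordRowProd

section BorderedBlockDiagonal

variable {A ι : Type*} [CommRing A] (κ : Type*) [DecidableEq κ]

/-- The block matrix consisting of a copy of `M` for every element of `κ`, bordered by one further
coordinate: the column of that coordinate is `c` in each copy, and its row is a basis vector. -/
def borderedBlockDiagonal (M : Matrix ι ι A) (c : ι → A) :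
    Matrix (ι × κ ⊕ Unit) (ι × κ ⊕ Unit) A :=
  fromBlocks (blockDiagonal fun _ : κ => M) (of fun r _ => c r.1) 0 1

theorem det_borderedBlockDiagonal [Fintype ι] [DecidableEq ι] [Fintype κ] (M : Matrix ι ι A)
    (c : ι → A) : (borderedBlockDiagonal κ M c).det = M.det ^ Fintype.card κ := by
  simp [borderedBlockDiagonal]

variable {κ}

theorem row_borderedBlockDiagonal_inl_dotProduct [Fintype ι] [Fintype κ] (M : Matrix ι ι A)
    (c : ι → A) (i : ι) (k : κ) (y : ι × κ ⊕ Unit → A) :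
    (borderedBlockDiagonal κ M c).row (inl (i, k)) ⬝ᵥ y =
      (M *ᵥ fun j => y (inl (j, k))) i + c i * y (inr ()) := by
  simp [borderedBlockDiagonal, mulVec, dotProduct, Fintype.sum_prod_type, blockDiagonal_apply,
    ite_mul]

theorem row_borderedBlockDiagonal_inr [DecidableEq ι] (M : Matrix ι ι A) (c : ι → A)
    (u : Unit) : (borderedBlockDiagonal κ M c).row (inr u) = Pi.single (inr u) 1 := by
  ext (j | j) <;> simp [borderedBlockDiagonal]

variable [Fintype ι] [DecidableEq ι] {q : ℕ} [NeZero q] {M : Matrix ι ι (ZMod q)} {c : ι → ZMod q}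

theorem one_sub_single_dvd_borderedBlockDiagonal_block [Finite κ] {i₀ : ι} (hc : c i₀ = 1)
    (hM : ∀ x : ι → ZMod q, (∀ i, x i ≠ 0) → (∀ i, c i = 0 → (M *ᵥ x) i ≠ 0) → (M *ᵥ x) i₀ = 0)
    (k : κ) :
    (1 - single (Pi.single (inr ()) 1) 1 : ℤ[ι × κ ⊕ Unit → ZMod q]) ∣
      (∏ i, (1 - single (Pi.single (inl (i, k)) 1) 1)) *
        ∏ i, (1 - single ((borderedBlockDiagonal κ M c).row (inl (i, k))) 1) := by
  cases nonempty_fintype κ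
  rw [← Finset.prod_erase_mul (a := i₀) Finset.univ (fun i => 1 - single (row _ (inl (i, k))) 1)
    (Finset.mem_univ i₀), ← mul_assoc, mul_one_sub_single_congr (w := Pi.single (inr ()) 1)]
  · exact dvd_mul_left _ _
  intro y hy
  simp only [map_mul, map_prod, mul_ne_zero_iff, Finset.prod_ne_zero_iff, Finset.mem_univ,
    Finset.mem_erase, and_true, forall_const, ne_eq, charEval_one_sub_single_eq_zero_iff,
    single_one_dotProduct, row_borderedBlockDiagonal_inl_dotProduct] at hy
  obtain ⟨hy_coord, hy_row⟩ := hy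
  have h_zero : (M *ᵥ fun j => y (inl (j, k))) i₀ = 0 := by
    refine hM _ hy_coord fun i hi => ?_
    have hne : i ≠ i₀ := by
      rintro rfl
      exact hy_coord i (eq_zero_of_zero_eq_one (hi.symm.trans hc) _)
    simpa [hi] using hy_row i hne
  rw [row_borderedBlockDiagonal_inl_dotProduct, h_zero, hc, zero_add, single_dotProduct]

variable [Fintype κ]

theorem coordRowProd_borderedBlockDiagonal_ne_zero [Nontrivial (ZMod q)] {x : ι → ZMod q}
    (hx : ∀ i, x i ≠ 0) (hMx : ∀ i, (M *ᵥ x) i + c i ≠ 0) :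
    coordRowProd ℤ (borderedBlockDiagonal κ M c) ≠ 0 := by
  refine coordRowProd_int_ne_zero_iff.2 ⟨Sum.elim (fun r => x r.1) 1, ?_, ?_⟩
  · rintro (⟨i, _⟩ | ⟨⟩)
    · exact hx i
    · exact one_ne_zero
  · rintro (⟨i, _⟩ | _)
    · simpa [row_borderedBlockDiagonal_inl_dotProduct] using hMx i
    · simp [row_borderedBlockDiagonal_inr]

theorem one_sub_single_pow_dvd_coordRowProd_borderedBlockDiagonal {i₀ : ι} (hc : c i₀ = 1)
    (hM : ∀ x : ι → ZMod q, (∀ i, x i ≠ 0) → (∀ i, c i = 0 → (M *ᵥ x) i ≠ 0) → (M *ᵥ x) i₀ = 0) :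
    (1 - single (Pi.single (inr ()) 1) 1) ^ Fintype.card κ ∣
      coordRowProd ℤ (borderedBlockDiagonal κ M c) := by
  have h_blocks := Finset.prod_dvd_prod_of_dvd _ _ fun k (_ : k ∈ Finset.univ (α := κ)) =>
    one_sub_single_dvd_borderedBlockDiagonal_block hc hM k
  rw [Finset.prod_const, Finset.card_univ, Finset.prod_mul_distrib] at h_blocks
  rw [coordRowProd, Fintype.prod_sum_type, Fintype.prod_sum_type, Fintype.prod_prod_type_right,
    Fintype.prod_prod_type_right, mul_mul_mul_comm]
  exact h_blocks.mul_right _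

theorem coordRowProd_borderedBlockDiagonal_eq_zero {R : Type*} [CommRing R] {i₀ : ι}
    (hc : c i₀ = 1)
    (hM : ∀ x : ι → ZMod q, (∀ i, x i ≠ 0) → (∀ i, c i = 0 → (M *ᵥ x) i ≠ 0) → (M *ᵥ x) i₀ = 0)
    (h_pow : (1 - single (Pi.single (inr ()) 1) 1 : R[ι × κ ⊕ Unit → ZMod q]) ^
      Fintype.card κ = 0) :
    coordRowProd R (borderedBlockDiagonal κ M c) = 0 := by
  have h_dvd := map_dvd (mapRingHom _ (Int.castRingHom R))
    (one_sub_single_pow_dvd_coordRowProd_borderedBlockDiagonal (κ := κ) hc hM)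
  rw [map_coordRowProd] at h_dvd
  simpa [h_pow] using h_dvd

end BorderedBlockDiagonal

theorem stmt_2_general {q : ℕ} (hq : IsPrimePow q) {R : Type*} [CommRing R]
    (hR : IsNilpotent (q : R))
    (H : ∀ n : ℕ, 1 ≤ n → ∀ M : Matrix (Fin n) (Fin n) (ZMod q), IsUnit M.det →
      coordRowProd R M = 0 → coordRowProd ℤ M = 0)
    {ι : Type*} [Fintype ι] [DecidableEq ι] (M : Matrix ι ι (ZMod q)) (hM : IsUnit M.det) :
    ∃ x : ι → ZMod q, (∀ i, x i ≠ 0) ∧ ∀ i, (M *ᵥ x) i ≠ 0 := by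
  have : NeZero q := ⟨hq.ne_zero⟩
  have : Fact (1 < q) := ⟨hq.one_lt⟩
  by_contra! h_no_vector
  obtain ⟨x, hx, h_max⟩ := exists_maximalFor_of_wellFoundedGT
    (fun x : ι → ZMod q => ∀ i, x i ≠ 0) (fun x => support (M *ᵥ x)) ⟨1, fun _ => one_ne_zero⟩
  obtain ⟨i₀, hi₀⟩ := h_no_vector x hx
  obtain ⟨m, hm⟩ := exists_one_sub_single_pow_eq_zero hq hR
  let c : ι → ZMod q := fun i => if (M *ᵥ x) i = 0 then 1 else 0
  let D := borderedBlockDiagonal (Fin m) M c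
  have hD_int : coordRowProd ℤ D ≠ 0 := coordRowProd_borderedBlockDiagonal_ne_zero hx fun i => by
    by_cases h : (M *ᵥ x) i = 0 <;> simp [c, h]
  have hD : coordRowProd R D = 0 := by
    refine coordRowProd_borderedBlockDiagonal_eq_zero (if_pos hi₀) (fun y hy hMy => ?_)
      (by simpa using hm (G := ι × Fin m ⊕ Unit → ZMod q) _ (by simp))
    by_contra hne
    exact h_max hy (fun i hi => hMy i (if_neg hi)) hne hi₀
  let e := (Fintype.equivFin (ι × Fin m ⊕ Unit)).symm
  exact hD_int <| (coordRowProd_submatrix_equiv_eq_zero_iff e D).1 <|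
    H _ Fintype.card_pos (D.submatrix e e) (by simpa [D, det_borderedBlockDiagonal] using hM.pow m)
      ((coordRowProd_submatrix_equiv_eq_zero_iff e D).2 hD)

/-- **Theorem C.** For a prime `p > 3`, if for every `n ≥ 1` and every nonsingular matrix
`M` the vanishing of `∏ (1 - g^{e i}) * ∏ (1 - g^{a i})` in `F_p[F_p^n]` implies its
vanishing in `ℤ[F_p^n]`, then the Alon–Jaeger–Tarsi conjecture holds for `p`. -/
theorem stmt_2 (p : ℕ) (hp : p.Prime) (hp3 : 3 < p)
    (H : ∀ n : ℕ, 1 ≤ n → ∀ M : Matrix (Fin n) (Fin n) (ZMod p), IsUnit M.det →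
      ((∏ i : Fin n, ((1 : AddMonoidAlgebra (ZMod p) (Fin n → ZMod p)) -
          AddMonoidAlgebra.single (Pi.single i 1) 1)) *
        (∏ i : Fin n, ((1 : AddMonoidAlgebra (ZMod p) (Fin n → ZMod p)) -
          AddMonoidAlgebra.single (M i) 1)) = 0) →
      ((∏ i : Fin n, ((1 : AddMonoidAlgebra ℤ (Fin n → ZMod p)) -
          AddMonoidAlgebra.single (Pi.single i 1) 1)) *
        (∏ i : Fin n, ((1 : AddMonoidAlgebra ℤ (Fin n → ZMod p)) -
          AddMonoidAlgebra.single (M i) 1)) = 0)) :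
    ∀ n : ℕ, 1 ≤ n → ∀ M : Matrix (Fin n) (Fin n) (ZMod p), IsUnit M.det →
      ∃ x : Fin n → ZMod p, (∀ i, x i ≠ 0) ∧ (∀ i, M.mulVec x i ≠ 0) :=
  fun _ _ M hM => stmt_2_general hp.isPrimePow (by simp) H M hM
end

section
/- Let k ≥ 2 be an integer and let p > k^{32k} be a prime. Then F_p can be written as a disjoint union F_p = A_1 ∪ A_2 ∪ … ∪ A_m with m = ⌈p^{1/(2k+1)}⌉, where each A_j (1 ≤ j ≤ m) is N_k-type. In particular, there exists an N_k-type subset of F_p of size at most p / ⌈p^{1/(2k+1)}⌉ ≤ p^{2k/(2k+1)}. -/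
/-- A subset `A ⊆ F_p` is `S_k`-type if every `a ∈ A` is the midpoint of a `(2k+1)`-term
arithmetic progression with nonzero common difference contained in `A`. -/
def SkType (p k : ℕ) (A : Finset (ZMod p)) : Prop :=
  ∀ a ∈ A, ∃ d : ZMod p, d ≠ 0 ∧ ∀ i : ℤ, -(k : ℤ) ≤ i → i ≤ (k : ℤ) → a + i • d ∈ A

/-- A subset `A ⊆ F_p` is `N_k`-type if it is `S_k`-type and moreover every `a ∉ A` is the
starting point of a `(k+1)`-term arithmetic progression whose other `k` terms lie in `A`. -/
def NkType (p k : ℕ) (A : Finset (ZMod p)) : Prop :=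
  SkType p k A ∧
    ∀ a : ZMod p, a ∉ A →
      ∃ d : ZMod p, d ≠ 0 ∧ ∀ i : ℤ, 1 ≤ i → i ≤ (k : ℤ) → a + i • d ∈ A

/-!
Colour `ℤ/n` uniformly at random with `m = ⌈n^(1/(2k+1))⌉` colours. With `t = ⌊(n-1)/(2k²)⌋`, the
integers `i * d` for `0 < |i| ≤ k` and `(k-1)t < d ≤ kt` are distinct and smaller than `n/2` in
absolute value, so around each point there are `t` pairwise disjoint punctured progressions
`{a + i * d : 0 < |i| ≤ k}`. None of them is entirely of a prescribed colour with probability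
`(1 - m^(-2k))^t ≤ exp (-t / m^(2k))`, where `t / m^(2k)` has order `m / k²`. This is less than
`1 / (n * m)`, so some colouring has, around every point, a punctured progression of every colour;
all its colour classes are of `N_k`-type.
-/

open Finset

section Counting

open Fintype

variable {X D I C : Type*} [Fintype D] [Fintype I] [Fintype C]

theorem card_colorings_forall_exists_ne_le [Fintype X] [DecidableEq X] [DecidableEq C]
    (e : D × I ↪ X) (j : C) :
    #{c : X → C | ∀ d, ∃ i, c (e (d, i)) ≠ j} ≤
      (card C ^ card I - 1) ^ card D * card C ^ (card X - card D * card I) := by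
  classical
  let restrict : {c : X → C // ∀ d, ∃ i, c (e (d, i)) ≠ j} →
      (D → {f : I → C // f ≠ fun _ => j}) × ({x // x ∉ Set.range e} → C) := fun c =>
    (fun d => ⟨fun i => c.1 (e (d, i)), fun h => (c.2 d).elim fun i hi => hi (congrFun h i)⟩,
      fun x => c.1 x)
  have restrict_injective : Function.Injective restrict := by
    intro c c' h
    ext x
    by_cases hx : x ∈ Set.range e
    · obtain ⟨⟨d, i⟩, rfl⟩ := hx
      exact congrFun (congrArg Subtype.val (congrFun (congrArg Prod.fst h) d)) i
    · exact congrFun (congrArg Prod.snd h) ⟨x, hx⟩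
  have card_range : card {x // x ∈ Set.range e} = card D * card I := by
    rw [← card_prod]
    exact Set.card_range_of_injective e.injective
  rw [← Fintype.card_subtype]
  refine (card_le_of_injective restrict restrict_injective).trans_eq ?_
  rw [card_prod, card_fun, card_fun, card_subtype_compl, card_subtype_compl, card_fun,
    card_subtype_eq, card_range]

theorem card_colorings_forall_exists_ne_le_density_mul [Fintype X] [DecidableEq X]
    [DecidableEq C] [Nonempty C] (e : D × I ↪ X) (j : C) :
    (#{c : X → C | ∀ d, ∃ i, c (e (d, i)) ≠ j} : ℝ) ≤
      (1 - ((card C : ℝ) ^ card I)⁻¹) ^ card D * (card C : ℝ) ^ card X := by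
  have hC : (card C : ℝ) ≠ 0 := by simp
  have hDI : card D * card I ≤ card X := by
    simpa only [card_prod] using card_le_of_injective e e.injective
  have hpow : (card C : ℝ) ^ card X =
      ((card C : ℝ) ^ card I) ^ card D * (card C : ℝ) ^ (card X - card D * card I) := by
    rw [← pow_mul, ← pow_add, mul_comm (card I), Nat.add_sub_cancel' hDI]
  calc (#{c : X → C | ∀ d, ∃ i, c (e (d, i)) ≠ j} : ℝ)
      ≤ ((card C : ℝ) ^ card I - 1) ^ card D * (card C : ℝ) ^ (card X - card D * card I) := by
        have := card_colorings_forall_exists_ne_le e j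
        rw [← @Nat.cast_le ℝ] at this
        simpa [Nat.cast_sub (Nat.one_le_pow (card I) _ (card_pos (α := C)))] using this
    _ = (1 - ((card C : ℝ) ^ card I)⁻¹) ^ card D * (card C : ℝ) ^ card X := by
        rw [hpow, ← mul_assoc, ← mul_pow, sub_mul, one_mul, inv_mul_cancel₀ (pow_ne_zero _ hC)]

theorem exists_coloring_forall_exists_forall_eq {A : Type*} [Fintype A] [Finite X] [Nonempty C]
    (e : A → D × I ↪ X)
    (h : (card A : ℝ) * card C * (1 - ((card C : ℝ) ^ card I)⁻¹) ^ card D < 1) :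
    ∃ c : X → C, ∀ a j, ∃ d, ∀ i, c (e a (d, i)) = j := by
  classical
  cases nonempty_fintype X
  by_contra! hbad
  let bad (x : A × C) : Finset (X → C) := {c | ∀ d, ∃ i, c (e x.1 (d, i)) ≠ x.2}
  have hcover : (univ : Finset (X → C)) = univ.biUnion bad := by
    ext c
    obtain ⟨a, j, haj⟩ := hbad c
    simpa [bad] using ⟨a, j, haj⟩
  have hpos : (0 : ℝ) < (card C : ℝ) ^ card X := by positivity
  refine lt_irrefl ((card C : ℝ) ^ card X) ?_
  calc (card C : ℝ) ^ card X = #(univ.biUnion bad) := by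
        rw [← hcover, card_univ, card_fun, Nat.cast_pow]
    _ ≤ ∑ x, (#(bad x) : ℝ) := mod_cast card_biUnion_le
    _ ≤ ∑ _x : A × C, (1 - ((card C : ℝ) ^ card I)⁻¹) ^ card D * (card C : ℝ) ^ card X :=
        sum_le_sum fun x _ => card_colorings_forall_exists_ne_le_density_mul (e x.1) x.2
    _ = (card A * card C * (1 - ((card C : ℝ) ^ card I)⁻¹) ^ card D) * (card C : ℝ) ^ card X := by
        rw [sum_const, card_univ, card_prod, nsmul_eq_mul, Nat.cast_mul, mul_assoc _ _ (_ ^ card X)]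
    _ < (card C : ℝ) ^ card X := mul_lt_of_lt_one_left hpos h

end Counting

section Progressions

/-- The indices `i` with `0 < |i| ≤ k` of a `(2k+1)`-term progression `a + i • d` without its
midpoint. -/
noncomputable def puncturedInterval (k : ℕ) : Finset ℤ := (Icc (-(k : ℤ)) k).erase 0

theorem mem_puncturedInterval {k : ℕ} {i : ℤ} : i ∈ puncturedInterval k ↔ i ≠ 0 ∧ |i| ≤ k := by
  simp [puncturedInterval, abs_le]

theorem card_puncturedInterval (k : ℕ) : #(puncturedInterval k) = 2 * k := by
  rw [puncturedInterval, card_erase_of_mem (by simp), Int.card_Icc]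
  lia

/-- A set of `t` common differences whose progressions through a common midpoint meet nowhere
else: for `1 ≤ i ≤ k` the dilates `i * separatedSteps k t` lie in the disjoint intervals
`((i - 1) * k * t, i * k * t]`. -/
noncomputable def separatedSteps (k t : ℕ) : Finset ℤ := Ioc ((k - 1) * t : ℤ) (k * t)

theorem card_separatedSteps (k t : ℕ) : #(separatedSteps k t) = t := by
  rw [separatedSteps, Int.card_Ioc, ← sub_mul, sub_sub_cancel, one_mul, Int.toNat_natCast]

variable {k t n : ℕ} {i i' d d' : ℤ}

theorem pos_of_mem_separatedSteps (hk : 0 < k) (hd : d ∈ separatedSteps k t) : 0 < d := by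
  have hk' : (0 : ℤ) ≤ k - 1 := by lia
  exact (mul_nonneg hk' t.cast_nonneg).trans_lt (mem_Ioc.1 hd).1

theorem mul_lt_mul_of_mem_separatedSteps (hd : d ∈ separatedSteps k t)
    (hd' : d' ∈ separatedSteps k t) (hi : 0 ≤ i) (hii' : i < i') (hi' : i' ≤ k) :
    i * d < i' * d' := by
  calc i * d ≤ (i' - 1) * (k * t) := by
        have : i ≤ i' - 1 := by lia
        exact mul_le_mul this (mem_Ioc.1 hd).2 (pos_of_mem_separatedSteps (by lia) hd).le (by lia)
    _ ≤ i' * ((k - 1) * t) := by linarith [mul_le_mul_of_nonneg_right hi' (Nat.cast_nonneg t)]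
    _ < i' * d' := by
        have : 0 < i' := by lia
        gcongr
        exact (mem_Ioc.1 hd').1

theorem abs_mul_le_of_mem_separatedSteps (hi : i ∈ puncturedInterval k)
    (hd : d ∈ separatedSteps k t) : |i * d| ≤ k ^ 2 * t := by
  have ⟨hi0, hik⟩ := mem_puncturedInterval.1 hi
  have hd0 : 0 < d := pos_of_mem_separatedSteps (by have := abs_pos.2 hi0; lia) hd
  rw [abs_mul, abs_of_pos hd0, sq, mul_assoc]
  have := (mem_Ioc.1 hd).2
  gcongr

theorem eq_and_eq_of_mul_eq_mul_of_mem_separatedSteps (hd : d ∈ separatedSteps k t)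
    (hi : i ∈ puncturedInterval k) (hd' : d' ∈ separatedSteps k t)
    (hi' : i' ∈ puncturedInterval k) (h : i * d = i' * d') : d = d' ∧ i = i' := by
  have ⟨hi0, hik⟩ := mem_puncturedInterval.1 hi
  have ⟨_, hik'⟩ := mem_puncturedInterval.1 hi'
  have hk : 0 < k := by have := abs_pos.2 hi0; lia
  have hd0 : 0 < d := pos_of_mem_separatedSteps hk hd
  have hd0' : 0 < d' := pos_of_mem_separatedSteps hk hd'
  have habs : |i| * d = |i'| * d' := by
    simpa only [abs_mul, abs_of_pos hd0, abs_of_pos hd0'] using congrArg abs h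
  have hi_abs : |i| = |i'| := by
    rcases lt_trichotomy |i| |i'| with hlt | heq | hgt
    · exact absurd habs
        (mul_lt_mul_of_mem_separatedSteps hd hd' (abs_nonneg i) hlt hik').ne
    · exact heq
    · exact absurd habs
        (mul_lt_mul_of_mem_separatedSteps hd' hd (abs_nonneg i') hgt hik).ne'
  obtain rfl : d = d' := mul_left_cancel₀ (abs_ne_zero.2 hi0) (habs.trans (by rw [hi_abs]))
  exact ⟨rfl, mul_right_cancel₀ hd0.ne' h⟩

theorem intCast_separatedSteps_ne_zero (hk : 0 < k) (hn : 2 * k ^ 2 * t < n)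
    (hd : d ∈ separatedSteps k t) : (d : ZMod n) ≠ 0 := by
  rw [Ne, ZMod.intCast_zmod_eq_zero_iff_dvd]
  intro hdvd
  have hd0 := pos_of_mem_separatedSteps hk hd
  have habs := abs_mul_le_of_mem_separatedSteps
    (mem_puncturedInterval.2 ⟨one_ne_zero, by simpa using mod_cast hk⟩) hd
  rw [one_mul, abs_of_pos hd0] at habs
  have := Int.le_of_dvd hd0 hdvd
  zify at hn
  linarith

/-- The points `a + i • d` of the pairwise disjoint punctured progressions around `a` with
differences `d` in `separatedSteps k t`. -/
noncomputable def puncturedProgressions (hn : 2 * k ^ 2 * t < n) (a : ZMod n) :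
    separatedSteps k t × puncturedInterval k ↪ ZMod n where
  toFun x := a + (x.2 : ℤ) • ((x.1 : ℤ) : ZMod n)
  inj' := by
    rintro ⟨⟨d, hd⟩, ⟨i, hi⟩⟩ ⟨⟨d', hd'⟩, ⟨i', hi'⟩⟩ h
    simp only [add_right_inj, zsmul_eq_mul, ← Int.cast_mul] at h
    have hdvd := (ZMod.intCast_eq_intCast_iff_dvd_sub _ _ _).1 h
    have hlt : |i' * d' - i * d| < n := by
      have := abs_mul_le_of_mem_separatedSteps hi hd
      have := abs_mul_le_of_mem_separatedSteps hi' hd'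
      zify at hn
      linarith [abs_sub (i' * d') (i * d)]
    have heq := sub_eq_zero.1 (Int.eq_zero_of_abs_lt_dvd hdvd hlt)
    obtain ⟨rfl, rfl⟩ := eq_and_eq_of_mul_eq_mul_of_mem_separatedSteps hd hi hd' hi' heq.symm
    rfl

end Progressions

section Colorings

variable {k t n : ℕ} {C : Type*}

/-- A colouring of `ℤ/n` is rich if, for every point `a` and every colour `j`, the point `a` is the
midpoint of a `(2k+1)`-term progression whose other `2k` terms all have colour `j`. -/
def PuncturedAPRich (k : ℕ) (c : ZMod n → C) : Prop :=
  ∀ a j, ∃ d : ZMod n, d ≠ 0 ∧ ∀ i ∈ puncturedInterval k, c (a + i • d) = j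

theorem PuncturedAPRich.nkType_colorClass [NeZero n] [DecidableEq C] {c : ZMod n → C}
    (hc : PuncturedAPRich k c) (j : C) : NkType n k {x | c x = j} := by
  refine ⟨fun a ha => ?_, fun a _ => ?_⟩ <;> obtain ⟨d, hd, h⟩ := hc a j
  · refine ⟨d, hd, fun i hi hi' => ?_⟩
    rcases eq_or_ne i 0 with rfl | hi0
    · simpa using ha
    · simpa using h i (mem_puncturedInterval.2 ⟨hi0, abs_le.2 ⟨hi, hi'⟩⟩)
  · refine ⟨d, hd, fun i hi hi' => ?_⟩
    simpa using h i (mem_puncturedInterval.2 ⟨by lia, abs_le.2 ⟨by lia, hi'⟩⟩)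

theorem exists_puncturedAPRich [NeZero n] [Fintype C] [Nonempty C] (hk : 0 < k)
    (hn : 2 * k ^ 2 * t < n)
    (h : (n : ℝ) * Fintype.card C * (1 - ((Fintype.card C : ℝ) ^ (2 * k))⁻¹) ^ t < 1) :
    ∃ c : ZMod n → C, PuncturedAPRich k c := by
  classical
  obtain ⟨c, hc⟩ := exists_coloring_forall_exists_forall_eq (C := C) (puncturedProgressions hn)
    (by simpa only [ZMod.card, Fintype.card_coe, card_puncturedInterval, card_separatedSteps])
  refine ⟨c, fun a j => ?_⟩
  obtain ⟨⟨d, hd⟩, hcd⟩ := hc a j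
  exact ⟨d, intCast_separatedSteps_ne_zero hk hn hd, fun i hi => hcd ⟨i, hi⟩⟩

end Colorings

section Estimates

theorem pow_le_two_mul_sub_one_pow {x : ℝ} {l : ℕ} (hx : 1 ≤ x) (hl : 2 * l ≤ x) :
    x ^ l ≤ 2 * (x - 1) ^ l := by
  have hx0 : 0 < x := by linarith
  have hhalf : 1 / 2 ≤ (1 + -x⁻¹) ^ l := by
    have hl' : l * x⁻¹ ≤ 1 / 2 := by
      rw [← div_eq_mul_inv, div_le_iff₀ hx0]
      linarith
    have hbernoulli := one_add_mul_le_pow (a := -x⁻¹) (by linarith [inv_le_one_of_one_le₀ hx]) l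
    linarith
  calc x ^ l = 2 * (1 / 2 * x ^ l) := by ring
    _ ≤ 2 * ((1 + -x⁻¹) ^ l * x ^ l) := by gcongr
    _ = 2 * (x - 1) ^ l := by
        rw [← mul_pow, add_mul, neg_mul, inv_mul_cancel₀ hx0.ne', one_mul, ← sub_eq_add_neg]

theorem one_sub_inv_pow_le_exp_neg_div {x : ℝ} (hx : 1 ≤ x) (t : ℕ) :
    (1 - x⁻¹) ^ t ≤ Real.exp (-(t / x)) := by
  calc (1 - x⁻¹) ^ t ≤ Real.exp (-x⁻¹) ^ t := by
        gcongr
        · linarith [inv_le_one_of_one_le₀ hx]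
        · exact Real.one_sub_le_exp_neg _
    _ = Real.exp (-(t / x)) := by rw [← Real.exp_nat_mul, mul_neg, div_eq_mul_inv]

theorem mul_log_lt_sub_of_pow_twelve_le {k x : ℝ} (hk : 2 ≤ k) (hx : k ^ 12 ≤ x) :
    8 * k ^ 2 * (k + 1) * Real.log x < x - 1 - 4 * k ^ 2 := by
  obtain ⟨v, hkv, rfl⟩ : ∃ v, k ^ 3 ≤ v ∧ v ^ 4 = x := by
    have hx0 : 0 ≤ x := le_trans (by positivity) hx
    refine ⟨√√x, ?_, ?_⟩
    · exact Real.le_sqrt_of_sq_le (Real.le_sqrt_of_sq_le (by rwa [← pow_mul, ← pow_mul]))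
    · rw [pow_mul _ 2 2, Real.sq_sqrt (Real.sqrt_nonneg x), Real.sq_sqrt hx0]
  have hv : 8 ≤ v := by linarith [pow_le_pow_left₀ zero_le_two hk 3]
  have hlog : Real.log (v ^ 4) ≤ 4 * (v - 1) := by
    rw [Real.log_pow]
    push_cast
    linarith [Real.log_le_sub_one_of_pos (show 0 < v by linarith)]
  have hk2 : 2 * k ^ 2 ≤ v := by nlinarith
  calc 8 * k ^ 2 * (k + 1) * Real.log (v ^ 4) ≤ (12 * v) * (4 * (v - 1)) := by
        have hk3 : 8 * k ^ 2 * (k + 1) ≤ 12 * v := by nlinarith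
        exact mul_le_mul hk3 hlog (Real.log_nonneg (one_le_pow₀ (by linarith))) (by linarith)
    _ < v ^ 4 - 1 - 4 * k ^ 2 := by nlinarith [pow_le_pow_left₀ (by norm_num) hv 2]

variable {k m n : ℕ}

theorem mul_log_lt_div_pow (hk : 2 ≤ k) (hkm : k ^ 12 ≤ m) (hn : (m - 1) ^ (2 * k + 1) < n) :
    (2 * k + 2) * Real.log m < ((n - 1) / (2 * k ^ 2) : ℕ) / (m : ℝ) ^ (2 * k) := by
  set t := (n - 1) / (2 * k ^ 2)
  set M := (m : ℝ) ^ (2 * k)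
  have hm : 1 ≤ m := (Nat.one_le_pow _ _ (by lia)).trans hkm
  have hmR : (1 : ℝ) ≤ m := mod_cast hm
  have hM : 1 ≤ M := one_le_pow₀ hmR
  have hhalf : M ≤ 2 * ((m : ℝ) - 1) ^ (2 * k) := by
    have h4k : 2 * (2 * k) ≤ m := by
      calc 2 * (2 * k) ≤ k ^ 3 := by nlinarith [Nat.pow_le_pow_left hk 2]
        _ ≤ k ^ 12 := Nat.pow_le_pow_right (by lia) (by norm_num)
        _ ≤ m := hkm
    exact pow_le_two_mul_sub_one_pow hmR (mod_cast h4k)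
  have ht : ((m : ℝ) - 1) ^ (2 * k + 1) < 2 * k ^ 2 * (t + 1) := by
    have : (m - 1) ^ (2 * k + 1) < 2 * k ^ 2 * (t + 1) :=
      (Nat.le_sub_one_of_lt hn).trans_lt (Nat.lt_mul_div_succ _ (by positivity))
    rw [← Nat.cast_one, ← Nat.cast_sub hm]
    exact mod_cast this
  have hupper : M * (m - 1 - 4 * k ^ 2) < 4 * k ^ 2 * t := by
    have : M * (m - 1) ≤ 2 * ((m : ℝ) - 1) ^ (2 * k + 1) := by
      rw [pow_succ, ← mul_assoc]
      gcongr
    nlinarith [sq_nonneg (k : ℝ)]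
  have hlog : M * (8 * k ^ 2 * (k + 1) * Real.log m) < M * (m - 1 - 4 * k ^ 2) := by
    gcongr
    exact mul_log_lt_sub_of_pow_twelve_le (mod_cast hk) (mod_cast hkm)
  rw [lt_div_iff₀ (by positivity)]
  refine lt_of_mul_lt_mul_left (a := (4 * k ^ 2 : ℝ)) ?_ (by positivity)
  linarith

theorem mul_one_sub_inv_pow_lt_one (hk : 2 ≤ k) (hkm : k ^ 12 ≤ m)
    (hlt : (m - 1) ^ (2 * k + 1) < n) (hle : n ≤ m ^ (2 * k + 1)) :
    (n : ℝ) * m * (1 - ((m : ℝ) ^ (2 * k))⁻¹) ^ ((n - 1) / (2 * k ^ 2)) < 1 := by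
  have hm : (1 : ℝ) ≤ m := mod_cast (Nat.one_le_pow _ _ (by lia)).trans hkm
  have hnm : (n : ℝ) * m ≤ Real.exp ((2 * k + 2) * Real.log m) := by
    calc (n : ℝ) * m ≤ (m : ℝ) ^ (2 * k + 1) * m := by
          gcongr
          exact mod_cast hle
      _ = Real.exp ((2 * k + 2) * Real.log m) := by
          rw [← pow_succ, ← Real.exp_log (by positivity : (0 : ℝ) < m ^ (2 * k + 1 + 1)),
            Real.log_pow]
          push_cast
          ring_nf
  have hprob := one_sub_inv_pow_le_exp_neg_div (one_le_pow₀ hm (n := 2 * k)) ((n - 1) / (2 * k ^ 2))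
  refine (mul_le_mul_of_nonneg hnm hprob (by positivity) (by positivity)).trans_lt ?_
  rw [← Real.exp_add, Real.exp_lt_one_iff]
  linarith [mul_log_lt_div_pow hk hkm hlt]

end Estimates

section CeilRoot

variable {n l : ℕ}

theorem le_ceil_rpow_one_div_pow (hl : l ≠ 0) : n ≤ ⌈(n : ℝ) ^ (1 / l : ℝ)⌉₊ ^ l := by
  have : (n : ℝ) ≤ (⌈(n : ℝ) ^ (1 / l : ℝ)⌉₊ : ℝ) ^ l := by
    calc (n : ℝ) = ((n : ℝ) ^ (1 / l : ℝ)) ^ l := by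
          rw [one_div, Real.rpow_inv_natCast_pow n.cast_nonneg hl]
      _ ≤ _ := by
          gcongr
          exact Nat.le_ceil _
  exact mod_cast this

theorem ceil_rpow_one_div_sub_one_pow_lt (hn : n ≠ 0) (hl : l ≠ 0) :
    (⌈(n : ℝ) ^ (1 / l : ℝ)⌉₊ - 1) ^ l < n := by
  have hceil : 0 < ⌈(n : ℝ) ^ (1 / l : ℝ)⌉₊ := Nat.ceil_pos.2 (by positivity)
  have hlt : ((⌈(n : ℝ) ^ (1 / l : ℝ)⌉₊ - 1 : ℕ) : ℝ) < (n : ℝ) ^ (1 / l : ℝ) :=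
    Nat.lt_ceil.1 (Nat.sub_one_lt hceil.ne')
  have := pow_lt_pow_left₀ hlt (Nat.cast_nonneg _) hl
  rw [one_div, Real.rpow_inv_natCast_pow n.cast_nonneg hl, ← one_div] at this
  exact mod_cast this

theorem div_ceil_rpow_one_div_le {x y : ℝ} (hx : 0 < x) (hy : 0 < y + 1) :
    x / ⌈x ^ (1 / (y + 1))⌉₊ ≤ x ^ (y / (y + 1)) := by
  have hroot : 0 < x ^ (1 / (y + 1)) := Real.rpow_pos_of_pos hx _
  calc x / ⌈x ^ (1 / (y + 1))⌉₊ ≤ x / x ^ (1 / (y + 1)) := by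
        gcongr
        exact Nat.le_ceil _
    _ = x ^ (y / (y + 1)) := by
        rw [div_eq_iff hroot.ne', ← Real.rpow_add hx, ← add_div, div_self hy.ne', Real.rpow_one]

end CeilRoot

theorem stmt_6_general (k : ℕ) (hk : 2 ≤ k) (n : ℕ) (hn : k ^ (12 * (2 * k + 1)) < n) :
    ∃ A : Fin (⌈(n : ℝ) ^ ((1 : ℝ) / (2 * (k : ℝ) + 1))⌉₊) → Finset (ZMod n),
      (∀ i j, i ≠ j → Disjoint (A i) (A j)) ∧
      (∀ x : ZMod n, ∃ j, x ∈ A j) ∧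
      (∀ j, NkType n k (A j)) ∧
      (∃ j, ((A j).card : ℝ) ≤ (n : ℝ) / (⌈(n : ℝ) ^ ((1 : ℝ) / (2 * (k : ℝ) + 1))⌉₊ : ℝ) ∧
        (n : ℝ) / (⌈(n : ℝ) ^ ((1 : ℝ) / (2 * (k : ℝ) + 1))⌉₊ : ℝ) ≤
          (n : ℝ) ^ ((2 * (k : ℝ)) / (2 * (k : ℝ) + 1))) := by
  have hn0 : 0 < n := by lia
  have : NeZero n := ⟨hn0.ne'⟩
  have hnR : (0 : ℝ) < n := mod_cast hn0
  set m := ⌈(n : ℝ) ^ ((1 : ℝ) / (2 * (k : ℝ) + 1))⌉₊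
  have hm0 : 0 < m := Nat.ceil_pos.2 (by positivity)
  have : NeZero m := ⟨hm0.ne'⟩
  have hm_root : m = ⌈(n : ℝ) ^ (1 / (2 * k + 1 : ℕ) : ℝ)⌉₊ := by push_cast; rfl
  have hle : n ≤ m ^ (2 * k + 1) := hm_root ▸ le_ceil_rpow_one_div_pow (by lia)
  have hlt : (m - 1) ^ (2 * k + 1) < n :=
    hm_root ▸ ceil_rpow_one_div_sub_one_pow_lt hn0.ne' (by lia)
  have hkm : k ^ 12 ≤ m :=
    (lt_of_pow_lt_pow_left₀ (2 * k + 1) m.zero_le ((pow_mul k _ _ ▸ hn).trans_le hle)).le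
  have hsteps : 2 * k ^ 2 * ((n - 1) / (2 * k ^ 2)) < n :=
    (Nat.mul_div_le _ _).trans_lt (Nat.sub_one_lt hn0.ne')
  obtain ⟨c, hc⟩ := exists_puncturedAPRich (C := Fin m) (by lia) hsteps
    (by simpa only [Fintype.card_fin] using mul_one_sub_inv_pow_lt_one hk hkm hlt hle)
  obtain ⟨j, hj⟩ := Fintype.exists_card_fiber_le_of_card_le_nsmul (f := c) (b := (n : ℝ) / m)
    (by simp [ZMod.card, mul_div_cancel₀, hm0.ne'])
  refine ⟨fun j => {x | c x = j}, fun i j hij => ?_, fun x => ⟨c x, by simp⟩,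
    hc.nkType_colorClass, j, hj, div_ceil_rpow_one_div_le hnR (by positivity)⟩
  exact disjoint_filter.2 fun x _ hxi hxj => hij (hxi.symm.trans hxj)

/-- For `k ≥ 2` and a prime `p > k^(32k)`, the field `F_p` is a disjoint union of
`m = ⌈p^(1/(2k+1))⌉` sets, each of `N_k`-type; in particular some `N_k`-type set has size at
most `p/m ≤ p^(2k/(2k+1))`. -/
theorem stmt_6 (k : ℕ) (hk : 2 ≤ k) (p : ℕ) (hp : p.Prime) (hpk : k ^ (32 * k) < p) :
    ∃ A : Fin (⌈(p : ℝ) ^ ((1 : ℝ) / (2 * (k : ℝ) + 1))⌉₊) → Finset (ZMod p),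
      (∀ i j, i ≠ j → Disjoint (A i) (A j)) ∧
      (∀ x : ZMod p, ∃ j, x ∈ A j) ∧
      (∀ j, NkType p k (A j)) ∧
      (∃ j, ((A j).card : ℝ) ≤ (p : ℝ) / (⌈(p : ℝ) ^ ((1 : ℝ) / (2 * (k : ℝ) + 1))⌉₊ : ℝ) ∧
        (p : ℝ) / (⌈(p : ℝ) ^ ((1 : ℝ) / (2 * (k : ℝ) + 1))⌉₊ : ℝ) ≤
          (p : ℝ) ^ ((2 * (k : ℝ)) / (2 * (k : ℝ) + 1))) :=
  stmt_6_general k hk p ((Nat.pow_le_pow_right (by lia) (by lia)).trans_lt hpk)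
end

section
/- Let p > 3 be a prime, n ≥ 1 an integer, M a nonsingular n×n matrix over F_p with row vectors a_1,…,a_n, and let ω ∈ ℂ be a primitive p-th root of unity. For each 1 ≤ i ≤ n let 0 ≤ t_i ≤ p−1 and 0 ≤ t'_i ≤ p−1 be integers, let c_{i,1},…,c_{i,t_i} ∈ F_p be pairwise distinct and d_{i,1},…,d_{i,t'_i} ∈ F_p be pairwise distinct. Then the following are equivalent: (P1) there is no vector x ∈ F_p^n such that x_i ≠ c_{i,k} for all 1 ≤ i ≤ n, 1 ≤ k ≤ t_i and (Mx)_i ≠ d_{i,k} for all 1 ≤ i ≤ n, 1 ≤ k ≤ t'_i; (P3) the element ∏_{1 ≤ i ≤ n, 1 ≤ k ≤ t_i} (1 − ω^{−c_{i,k}} g^{e_i}) · ∏_{1 ≤ i ≤ n, 1 ≤ k ≤ t'_i} (1 − ω^{−d_{i,k}} g^{a_i}) of the complex group algebra ℂ[F_p^n] is zero. -/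
/-!
Write `ψ a = ω ^ a`. The algebra homomorphisms `g^v ↦ ψ (v ⬝ᵥ x)`, one for each vector `x`,
separate the elements of the group algebra, by Fourier inversion. The homomorphism
attached to `x` kills the factor `1 - ω^{-a} g^v` exactly when `x` lies on the hyperplane
`v ⬝ᵥ x = a`, and its values lie in an integral domain. So a product of such factors vanishes
if and only if every `x` lies on at least one of the corresponding hyperplanes.
-/

section CharacterEvaluation

variable {G K : Type*} [AddMonoid G]

/-- The algebra homomorphism `K[G] → K` extending an additive character `χ` of `G`. -/
noncomputable def addCharEval [CommSemiring K] (χ : AddChar G K) : AddMonoidAlgebra K G →ₐ[K] K :=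
  AddMonoidAlgebra.lift K K G χ.toMonoidHom

@[simp]
theorem addCharEval_single [CommSemiring K] (χ : AddChar G K) (g : G) (r : K) :
    addCharEval χ (AddMonoidAlgebra.single g r) = r * χ g := by
  simp [addCharEval, AddMonoidAlgebra.lift_single]

theorem addCharEval_one_sub_single_eq_zero_iff [CommRing K] (χ : AddChar G K) (g : G) (r : K) :
    addCharEval χ (1 - AddMonoidAlgebra.single g r) = 0 ↔ r * χ g = 1 := by
  rw [map_sub, map_one, addCharEval_single, sub_eq_zero, eq_comm]

end CharacterEvaluation

section Fourier

variable {ι R K : Type*} [Fintype ι] [CommRing R]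

/-- The additive character `v ↦ ψ (v ⬝ᵥ x)` of `ι → R`. For primitive `ψ`, the vectors `x`
parametrise the frequencies in Fourier analysis on `ι → R`. -/
def dotProductAddChar [CommMonoid K] (ψ : AddChar R K) (x : ι → R) : AddChar (ι → R) K where
  toFun v := ψ (v ⬝ᵥ x)
  map_zero_eq_one' := by simp
  map_add_eq_mul' v w := by rw [add_dotProduct, AddChar.map_add_eq_mul]

@[simp]
theorem dotProductAddChar_apply [CommMonoid K] (ψ : AddChar R K) (x v : ι → R) :
    dotProductAddChar ψ x v = ψ (v ⬝ᵥ x) :=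
  rfl

theorem dotProductAddChar_ne_one [CommMonoid K] {ψ : AddChar R K} (hψ : ψ.IsPrimitive)
    {x : ι → R} (hx : x ≠ 0) : dotProductAddChar ψ x ≠ 1 := by
  classical
  obtain ⟨i, hi⟩ := Function.ne_iff.mp hx
  obtain ⟨r, hr⟩ := AddChar.ne_one_iff.mp (hψ hi)
  refine AddChar.ne_one_iff.mpr ⟨Pi.single i r, ?_⟩
  rwa [dotProductAddChar_apply, single_dotProduct, mul_comm, ← AddChar.mulShift_apply]

variable [Fintype R] [CommRing K] [IsDomain K] {ψ : AddChar R K}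

theorem sum_addChar_dotProduct_eq_zero [DecidableEq ι] (hψ : ψ.IsPrimitive)
    {v : ι → R} (hv : v ≠ 0) :
    ∑ x : ι → R, ψ (v ⬝ᵥ x) = 0 := by
  simpa [dotProduct_comm] using AddChar.sum_eq_zero_of_ne_one (dotProductAddChar_ne_one hψ hv)

theorem sum_addCharEval_mul_eq_card_mul_coeff [DecidableEq ι] (hψ : ψ.IsPrimitive)
    (f : AddMonoidAlgebra K (ι → R)) (w : ι → R) :
    ∑ x, addCharEval (dotProductAddChar ψ x) f * ψ (-(w ⬝ᵥ x)) =
      Fintype.card (ι → R) * f.coeff w := by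
  induction f using AddMonoidAlgebra.induction_linear with
  | zero => simp
  | add f g hf hg =>
    simp only [map_add, add_mul, Finset.sum_add_distrib, hf, hg, AddMonoidAlgebra.coeff_add,
      Finsupp.add_apply, mul_add]
  | single v r =>
    have summand_eq (x : ι → R) :
        addCharEval (dotProductAddChar ψ x) (AddMonoidAlgebra.single v r) * ψ (-(w ⬝ᵥ x)) =
          r * ψ ((v - w) ⬝ᵥ x) := by
      rw [addCharEval_single, dotProductAddChar_apply, mul_assoc, ← AddChar.map_add_eq_mul,
        sub_dotProduct, sub_eq_add_neg]
    simp only [summand_eq, ← Finset.mul_sum, AddMonoidAlgebra.coeff_single]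
    obtain rfl | hvw := eq_or_ne v w
    · simp [mul_comm]
    · rw [sum_addChar_dotProduct_eq_zero hψ (sub_ne_zero.mpr hvw),
        Finsupp.single_eq_of_ne' hvw, mul_zero, mul_zero]

theorem eq_zero_iff_forall_addCharEval_eq_zero (hψ : ψ.IsPrimitive)
    (hR : (Fintype.card R : K) ≠ 0) {f : AddMonoidAlgebra K (ι → R)} :
    f = 0 ↔ ∀ x, addCharEval (dotProductAddChar ψ x) f = 0 := by
  classical
  refine ⟨fun hf x => by rw [hf, map_zero], fun hf => ?_⟩
  ext w
  have card_mul_coeff : (Fintype.card (ι → R) : K) * f.coeff w = 0 := by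
    simp only [← sum_addCharEval_mul_eq_card_mul_coeff hψ, hf, zero_mul, Finset.sum_const_zero]
  have card_ne_zero : (Fintype.card (ι → R) : K) ≠ 0 := by
    rw [Fintype.card_fun, Nat.cast_pow]
    exact pow_ne_zero _ hR
  simpa using (mul_eq_zero.mp card_mul_coeff).resolve_left card_ne_zero

end Fourier

section Hyperplanes

variable {N : ℕ} [NeZero N] {ι K : Type*} [Fintype ι] [CommRing K] {ω : K}

theorem addCharEval_zmodChar_one_sub_single_eq_zero_iff (hω : IsPrimitiveRoot ω N)
    (x v : ι → ZMod N) (a : ZMod N) :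
    addCharEval (dotProductAddChar (AddChar.zmodChar N hω.pow_eq_one) x)
        (1 - AddMonoidAlgebra.single v (ω ^ (-a).val)) = 0 ↔ v ⬝ᵥ x = a := by
  have hψ := AddChar.zmodChar_primitive_of_primitive_root N hω
  rw [addCharEval_one_sub_single_eq_zero_iff, dotProductAddChar_apply,
    ← AddChar.zmodChar_apply hω.pow_eq_one, ← AddChar.map_add_eq_mul,
    hψ.zmod_char_eq_one_iff, neg_add_eq_zero, eq_comm]

theorem stmt_11_general [IsDomain K] {κ : Type*} [Fintype κ] (hω : IsPrimitiveRoot ω N)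
    (v : κ → ι → ZMod N) (a : κ → ZMod N) :
    (¬ ∃ x : ι → ZMod N, ∀ k, v k ⬝ᵥ x ≠ a k) ↔
      ∏ k, ((1 : AddMonoidAlgebra K (ι → ZMod N)) -
        AddMonoidAlgebra.single (v k) (ω ^ (-(a k)).val)) = 0 := by
  have hN : (Fintype.card (ZMod N) : K) ≠ 0 := by simpa using hω.neZero'.ne
  rw [eq_zero_iff_forall_addCharEval_eq_zero
    (AddChar.zmodChar_primitive_of_primitive_root N hω) hN]
  simp only [map_prod, Finset.prod_eq_zero_iff, Finset.mem_univ, true_and,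
    addCharEval_zmodChar_one_sub_single_eq_zero_iff hω, not_exists, not_forall, not_not]

end Hyperplanes

/-- **Proposition (equivalence of (P1) and (P3)).** Let `p > 3` be prime, `M` nonsingular
with rows `a i = M i`, `ω` a primitive `p`-th root of unity in `ℂ`, and forbidden values
`c i k` (pairwise distinct in `k`) and `d i k` (pairwise distinct in `k`). Then no vector
`x` avoids all the forbidden values (`x i ≠ c i k` and `(Mx) i ≠ d i k`) if and only if
`∏_{i,k} (1 - ω^{-c i k} g^{e i}) * ∏_{i,k} (1 - ω^{-d i k} g^{a i}) = 0` in `ℂ[F_p^n]`. -/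
theorem stmt_11 (p : ℕ) (hp : p.Prime) (hp3 : 3 < p) (n : ℕ) (hn : 1 ≤ n)
    (M : Matrix (Fin n) (Fin n) (ZMod p)) (hM : IsUnit M.det)
    (ω : ℂ) (hω : IsPrimitiveRoot ω p)
    (t t' : Fin n → ℕ) (ht : ∀ i, t i ≤ p - 1) (ht' : ∀ i, t' i ≤ p - 1)
    (c : (i : Fin n) → Fin (t i) → ZMod p) (hc : ∀ i, Function.Injective (c i))
    (d : (i : Fin n) → Fin (t' i) → ZMod p) (hd : ∀ i, Function.Injective (d i)) :
    (¬ ∃ x : Fin n → ZMod p,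
        (∀ i k, x i ≠ c i k) ∧ (∀ i k, M.mulVec x i ≠ d i k)) ↔
    ((∏ i : Fin n, ∏ k : Fin (t i),
        ((1 : AddMonoidAlgebra ℂ (Fin n → ZMod p)) -
          AddMonoidAlgebra.single (Pi.single i 1) (ω ^ (-(c i k)).val))) *
      (∏ i : Fin n, ∏ k : Fin (t' i),
        ((1 : AddMonoidAlgebra ℂ (Fin n → ZMod p)) -
          AddMonoidAlgebra.single (M i) (ω ^ (-(d i k)).val))) = 0) := by
  have : NeZero p := ⟨hp.ne_zero⟩
  simpa [Fintype.prod_sum_type, Fintype.prod_sigma, Sigma.forall, Sum.forall, Matrix.mulVec]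
    using stmt_11_general hω
      (Sum.elim (fun k : Σ i, Fin (t i) => Pi.single k.1 1) (fun k : Σ i, Fin (t' i) => M k.1))
      (Sum.elim (fun k => c k.1 k.2) (fun k => d k.1 k.2))
end

section
/- Let p > 3 be a prime, n ≥ 1 an integer, M a nonsingular n×n matrix over F_p with row vectors a_1,…,a_n. For each 1 ≤ i ≤ n let 0 ≤ t_i ≤ p−1 and 0 ≤ t'_i ≤ p−1 be integers, let c_{i,1},…,c_{i,t_i} ∈ F_p be pairwise distinct and d_{i,1},…,d_{i,t'_i} ∈ F_p be pairwise distinct. If there is no vector x ∈ F_p^n such that x_i ≠ c_{i,k} for all 1 ≤ i ≤ n, 1 ≤ k ≤ t_i and (Mx)_i ≠ d_{i,k} for all 1 ≤ i ≤ n, 1 ≤ k ≤ t'_i, then ∏_{i=1}^n (1 − g^{e_i})^{t_i} · ∏_{i=1}^n (1 − g^{a_i})^{t'_i} = 0 in the group algebra F_p[F_p^n]. -/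
/-!
Lift `1 - g^v` to `ζ^c - g^v` over `ℤ[ζ]`, where `ζ` is a primitive `q`-th root of unity and `q` is
a power of `p`. The character `g^v ↦ ζ^(v ⬝ x)` kills `ζ^c - g^v` as soon as `v ⬝ x = c`, so if
every point `x` lies on one of the hyperplanes `v_j ⬝ x = c_j`, every such character kills
`∏ j, (ζ^(c_j) - g^(v_j))`. By linear independence of characters, an element of `ℤ[ζ][(ℤ/q)^ι]`
killed by all of them is zero, and the reduction `ζ ↦ 1` modulo `p` turns the vanishing product into
`∏ j, (1 - g^(v_j))`.
-/

open Polynomial AddMonoidAlgebra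

section CyclotomicIntegers

instance isDomain_adjoinRoot_cyclotomic (n : ℕ) [NeZero n] :
    IsDomain (AdjoinRoot (cyclotomic n ℤ)) :=
  AdjoinRoot.isDomain_of_prime (cyclotomic.irreducible (NeZero.pos n)).prime

instance charZero_adjoinRoot_cyclotomic (n : ℕ) [NeZero n] :
    CharZero (AdjoinRoot (cyclotomic n ℤ)) :=
  charZero_of_injective_algebraMap
    (AdjoinRoot.of.injective_of_degree_ne_zero (degree_cyclotomic_pos n ℤ (NeZero.pos n)).ne')

theorem isPrimitiveRoot_root_cyclotomic (n : ℕ) [NeZero n] :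
    IsPrimitiveRoot (AdjoinRoot.root (cyclotomic n ℤ)) n := by
  rw [← isRoot_cyclotomic_iff, ← map_cyclotomic n (AdjoinRoot.of (cyclotomic n ℤ))]
  exact AdjoinRoot.isRoot_root _

/-- The standard additive character `a ↦ ζ ^ a` of `ZMod n` with values in `ℤ[ζ]`, realised as
`AdjoinRoot (cyclotomic n ℤ)`. -/
noncomputable def cyclotomicChar (n : ℕ) [NeZero n] :
    AddChar (ZMod n) (AdjoinRoot (cyclotomic n ℤ)) :=
  AddChar.zmodChar n (isPrimitiveRoot_root_cyclotomic n).pow_eq_one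

theorem isPrimitive_cyclotomicChar (n : ℕ) [NeZero n] : (cyclotomicChar n).IsPrimitive :=
  AddChar.zmodChar_primitive_of_primitive_root n (isPrimitiveRoot_root_cyclotomic n)

theorem eval_one_cyclotomic_prime_pow_eq_zero (p k : ℕ) [Fact p.Prime] (A : Type*) [CommRing A]
    [CharP A p] : (cyclotomic (p ^ k) A).eval 1 = 0 := by
  cases k with
  | zero => simp
  | succ k => rw [eval_one_cyclotomic_prime_pow, CharP.cast_eq_zero]

theorem exists_ringHom_cyclotomicChar_eq_one {p k q : ℕ} [Fact p.Prime] [NeZero q]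
    (hq : q = p ^ k) (A : Type*) [CommRing A] [CharP A p] :
    ∃ φ : AdjoinRoot (cyclotomic q ℤ) →+* A, ∀ a, φ (cyclotomicChar q a) = 1 := by
  have hroot : (cyclotomic q ℤ).eval₂ (Int.castRingHom A) 1 = 0 := by
    rw [← eval_map, map_cyclotomic, hq, eval_one_cyclotomic_prime_pow_eq_zero]
  refine ⟨AdjoinRoot.lift (Int.castRingHom A) 1 hroot, fun a ↦ ?_⟩
  rw [cyclotomicChar, AddChar.zmodChar_apply, map_pow, AdjoinRoot.lift_root, one_pow]

end CyclotomicIntegers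

section DotProductCharacters

variable {F R ι : Type*} [CommRing F] [CommRing R] [Fintype ι]

/-- The character `x ↦ ψ (v ⬝ᵥ x)` of `ι → F`, through which the additive character `ψ` of `F`
pairs `ι → F` with itself. -/
def dotProductChar (ψ : AddChar F R) (v : ι → F) : AddChar (ι → F) R :=
  ψ.compAddMonoidHom (dotProductBilin F F v).toAddMonoidHom

theorem dotProductChar_apply (ψ : AddChar F R) (v x : ι → F) :
    dotProductChar ψ v x = ψ (v ⬝ᵥ x) :=
  rfl

theorem dotProductChar_comm (ψ : AddChar F R) (v x : ι → F) :
    dotProductChar ψ v x = dotProductChar ψ x v := by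
  rw [dotProductChar_apply, dotProductChar_apply, dotProduct_comm]

theorem dotProductChar_injective {ψ : AddChar F R} (hψ : ψ.IsPrimitive) :
    Function.Injective (dotProductChar ψ : (ι → F) → AddChar (ι → F) R) := by
  classical
  intro v w hvw
  ext i
  apply AddChar.to_mulShift_inj_of_isPrimitive hψ
  ext a
  simpa only [dotProductChar_apply, dotProduct_single, AddChar.mulShift_apply] using
    DFunLike.congr_fun hvw (Pi.single i a)

/-- By symmetry of the pairing, the coefficients of `f` form a linear relation among the distinct
characters `dotProductChar ψ v`, so Dedekind's independence of characters applies. -/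
theorem eq_zero_of_forall_lift_dotProductChar_eq_zero [IsDomain R] {ψ : AddChar F R}
    (hψ : ψ.IsPrimitive) {f : AddMonoidAlgebra R (ι → F)}
    (hf : ∀ x, lift R R (ι → F) (dotProductChar ψ x).toMonoidHom f = 0) : f = 0 := by
  have hindep : LinearIndependent R fun v : ι → F ↦
      ((dotProductChar ψ v).toMonoidHom : Multiplicative (ι → F) → R) :=
    (linearIndependent_monoidHom (Multiplicative (ι → F)) R).comp
      (fun v ↦ (dotProductChar ψ v).toMonoidHom)
      (AddChar.toMonoidHomEquiv.injective.comp (dotProductChar_injective hψ))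
  rw [← coeff_eq_zero]
  refine linearIndependent_iff.1 hindep f.coeff (funext fun x ↦ ?_)
  rw [Finsupp.linearCombination_apply, Finsupp.sum, Finset.sum_apply, Pi.zero_apply, ← hf x.toAdd,
    lift_apply, Finsupp.sum]
  exact Finset.sum_congr rfl fun v _ ↦ congrArg (f.coeff v • ·) (dotProductChar_comm ψ v x.toAdd)

theorem prod_single_sub_single_eq_zero_of_cover {κ : Type*} [Fintype κ] [IsDomain R]
    {ψ : AddChar F R} (hψ : ψ.IsPrimitive) (v : κ → ι → F) (c : κ → F)
    (hcover : ∀ x, ∃ j, v j ⬝ᵥ x = c j) :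
    ∏ j, (single 0 (ψ (c j)) - single (v j) 1 : AddMonoidAlgebra R (ι → F)) = 0 := by
  refine eq_zero_of_forall_lift_dotProductChar_eq_zero hψ fun x ↦ ?_
  obtain ⟨j, hj⟩ := hcover x
  rw [map_prod]
  refine Finset.prod_eq_zero (Finset.mem_univ j) ?_
  have hv : dotProductChar ψ x (v j) = ψ (c j) := by
    rw [dotProductChar_comm, dotProductChar_apply, hj]
  simp [lift_single, hv]

end DotProductCharacters

section PrimePower

variable {p k q : ℕ} [Fact p.Prime] {A ι κ : Type*} [CommRing A] [CharP A p] [Fintype ι]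
  [Fintype κ]

theorem prod_one_sub_single_eq_zero_of_cover (hq : q = p ^ k) (v : κ → ι → ZMod q)
    (c : κ → ZMod q) (hcover : ∀ x, ∃ j, v j ⬝ᵥ x = c j) :
    ∏ j, (1 - single (v j) 1 : AddMonoidAlgebra A (ι → ZMod q)) = 0 := by
  have : NeZero q := ⟨hq ▸ pow_ne_zero k (NeZero.ne p)⟩
  obtain ⟨φ, hφ⟩ := exists_ringHom_cyclotomicChar_eq_one hq A
  have hlift := congrArg (mapRingHom (ι → ZMod q) φ)
    (prod_single_sub_single_eq_zero_of_cover (isPrimitive_cyclotomicChar q) v c hcover)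
  simpa only [map_prod, map_sub, mapRingHom_single, hφ, map_one, map_zero, ← one_def] using hlift

theorem stmt_12_general [DecidableEq ι] (hq : q = p ^ k) (M : Matrix κ ι (ZMod q))
    {t : ι → ℕ} {t' : κ → ℕ} (c : (i : ι) → Fin (t i) → ZMod q)
    (d : (j : κ) → Fin (t' j) → ZMod q)
    (h : ¬ ∃ x : ι → ZMod q, (∀ i l, x i ≠ c i l) ∧ (∀ j l, M.mulVec x j ≠ d j l)) :
    (∏ i, (1 - single (Pi.single i 1) 1 : AddMonoidAlgebra A (ι → ZMod q)) ^ t i) *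
      (∏ j, (1 - single (M j) 1 : AddMonoidAlgebra A (ι → ZMod q)) ^ t' j) = 0 := by
  let v : (Σ i, Fin (t i)) ⊕ (Σ j, Fin (t' j)) → ι → ZMod q :=
    Sum.elim (fun s ↦ Pi.single s.1 1) (fun s ↦ M s.1)
  let b : (Σ i, Fin (t i)) ⊕ (Σ j, Fin (t' j)) → ZMod q :=
    Sum.elim (fun s ↦ c s.1 s.2) (fun s ↦ d s.1 s.2)
  have hcover : ∀ x, ∃ s, v s ⬝ᵥ x = b s := by
    intro x
    by_contra! hx
    refine h ⟨x, fun i l ↦ ?_, fun j l ↦ hx (.inr ⟨j, l⟩)⟩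
    simpa [v, b] using hx (.inl ⟨i, l⟩)
  simpa [v, Fintype.prod_sum_type, Fintype.prod_sigma] using
    prod_one_sub_single_eq_zero_of_cover (A := A) hq v b hcover

end PrimePower

/-- **Proposition ((P1) implies (P4)).** Let `p > 3` be prime, `M` nonsingular with rows
`a i = M i`, and forbidden values `c i k` (pairwise distinct in `k`) and `d i k`
(pairwise distinct in `k`). If no vector `x` avoids all the forbidden values, then
`∏ i, (1 - g^{e i})^(t i) * ∏ i, (1 - g^{a i})^(t' i) = 0` in `F_p[F_p^n]`. -/
theorem stmt_12 (p : ℕ) (hp : p.Prime) (hp3 : 3 < p) (n : ℕ) (hn : 1 ≤ n)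
    (M : Matrix (Fin n) (Fin n) (ZMod p)) (hM : IsUnit M.det)
    (t t' : Fin n → ℕ) (ht : ∀ i, t i ≤ p - 1) (ht' : ∀ i, t' i ≤ p - 1)
    (c : (i : Fin n) → Fin (t i) → ZMod p) (hc : ∀ i, Function.Injective (c i))
    (d : (i : Fin n) → Fin (t' i) → ZMod p) (hd : ∀ i, Function.Injective (d i))
    (h : ¬ ∃ x : Fin n → ZMod p,
        (∀ i k, x i ≠ c i k) ∧ (∀ i k, M.mulVec x i ≠ d i k)) :
    (∏ i : Fin n, ((1 : AddMonoidAlgebra (ZMod p) (Fin n → ZMod p)) -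
        AddMonoidAlgebra.single (Pi.single i 1) 1) ^ (t i)) *
      (∏ i : Fin n, ((1 : AddMonoidAlgebra (ZMod p) (Fin n → ZMod p)) -
        AddMonoidAlgebra.single (M i) 1) ^ (t' i)) = 0 := by
  have : Fact p.Prime := ⟨hp⟩
  exact stmt_12_general (pow_one p).symm M c d h
end

section
/- Let p be a prime, n ≥ 1 an integer, let v_1,…,v_m ∈ F_p^n be vectors, let t_1,…,t_m be integers with 0 ≤ t_j ≤ p−1, and let λ_1,…,λ_m ∈ F_p \ {0}. Then ∏_{j=1}^m (1 − g^{λ_j v_j})^{t_j} = 0 in the group algebra F_p[F_p^n] if and only if ∏_{j=1}^m (1 − g^{v_j})^{t_j} = 0 in F_p[F_p^n]. (Consequently, for a nonsingular matrix M with rows a_1,…,a_n, standard basis vectors e_1,…,e_n, exponents 0 ≤ t_i, t'_i ≤ p−1 and nonzero scalars λ_i, μ_i, the identity ∏_{i=1}^n (1 − g^{λ_i e_i})^{t_i} · ∏_{i=1}^n (1 − g^{μ_i a_i})^{t'_i} = 0 in F_p[F_p^n] holds if and only if ∏_{i=1}^n (1 − g^{e_i})^{t_i} · ∏_{i=1}^n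 (1 − g^{a_i})^{t'_i} = 0.) -/
/-! In any ring, a unit `u` satisfies `1 - u ∣ 1 - u ^ k` for every integer `k`. Dilating a vector
by a residue class modulo `N` raises its basis element of the group algebra to an integer power, so
`1 - g^v` divides `1 - g^(c • v)`; when `c` is invertible, dilating by `c⁻¹` gives the reverse
divisibility. Mutual divisibility of the factors already forces the two products to vanish together,
so the two factors need not be shown to differ by a unit. -/

theorem one_sub_unit_dvd_one_sub_zpow {A : Type*} [Ring A] (u : Aˣ) (k : ℤ) :
    (1 : A) - u ∣ 1 - ↑(u ^ k) := by
  obtain ⟨n, rfl | rfl⟩ := k.eq_nat_or_neg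
  · simpa only [zpow_natCast, Units.val_pow_eq_pow_val] using one_sub_dvd_one_sub_pow (u : A) n
  · have factor_neg : (1 : A) - ↑(u ^ (-n : ℤ)) = (1 - (u : A) ^ n) * -↑(u ^ (-n : ℤ)) := by
      rw [mul_neg, sub_mul, one_mul, ← Units.val_pow_eq_pow_val, ← Units.val_mul, zpow_neg,
        zpow_natCast, mul_inv_cancel, Units.val_one, neg_sub]
    exact factor_neg ▸ (one_sub_dvd_one_sub_pow (u : A) n).mul_right _

theorem prod_pow_eq_zero_of_dvd {M ι : Type*} [CommMonoidWithZero M] {s : Finset ι} {a b : ι → M}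
    {t : ι → ℕ} (hab : ∀ j ∈ s, a j ∣ b j) (ha : ∏ j ∈ s, a j ^ t j = 0) :
    ∏ j ∈ s, b j ^ t j = 0 :=
  eq_zero_of_zero_dvd <|
    ha ▸ Finset.prod_dvd_prod_of_dvd _ _ fun j hj ↦ pow_dvd_pow_of_dvd (hab j hj) (t j)

section GroupAlgebra

open AddMonoidAlgebra

theorem one_sub_single_dvd_one_sub_single_zsmul (R : Type*) {G : Type*} [Ring R] [AddGroup G]
    (k : ℤ) (v : G) :
    (1 : AddMonoidAlgebra R G) - single v 1 ∣ 1 - single (k • v) 1 := by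
  let basisUnit : Multiplicative G →* (AddMonoidAlgebra R G)ˣ := (of R G).toHomUnits
  have single_zsmul : single (k • v) 1 = (↑(basisUnit (.ofAdd v) ^ k) : AddMonoidAlgebra R G) := by
    rw [← map_zpow, ← ofAdd_zsmul]
    rfl
  exact single_zsmul ▸ one_sub_unit_dvd_one_sub_zpow (basisUnit (.ofAdd v)) k

variable (R : Type*) {V : Type*} {N : ℕ} [AddCommGroup V] [Module (ZMod N) V]

theorem one_sub_single_dvd_one_sub_single_zmod_smul [Ring R] (c : ZMod N) (v : V) :
    (1 : AddMonoidAlgebra R V) - single v 1 ∣ 1 - single (c • v) 1 := by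
  obtain ⟨k, rfl⟩ := ZMod.intCast_surjective c
  simpa only [Int.cast_smul_eq_zsmul] using one_sub_single_dvd_one_sub_single_zsmul R k v

theorem one_sub_single_units_smul_dvd_one_sub_single [Ring R] (c : (ZMod N)ˣ) (v : V) :
    (1 : AddMonoidAlgebra R V) - single (c • v) 1 ∣ 1 - single v 1 := by
  simpa only [← Units.smul_def, inv_smul_smul] using
    one_sub_single_dvd_one_sub_single_zmod_smul R (↑c⁻¹ : ZMod N) (c • v)

theorem stmt_15_general [CommRing R] {ι : Type*} (s : Finset ι) (v : ι → V) (t : ι → ℕ)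
    (c : ι → (ZMod N)ˣ) :
    ∏ j ∈ s, ((1 : AddMonoidAlgebra R V) - single (c j • v j) 1) ^ t j = 0 ↔
      ∏ j ∈ s, ((1 : AddMonoidAlgebra R V) - single (v j) 1) ^ t j = 0 :=
  ⟨prod_pow_eq_zero_of_dvd fun j _ ↦ one_sub_single_units_smul_dvd_one_sub_single R (c j) (v j),
    prod_pow_eq_zero_of_dvd fun j _ ↦
      one_sub_single_dvd_one_sub_single_zmod_smul R (c j : ZMod N) (v j)⟩

end GroupAlgebra

/-- **Lemma (dilation invariance of vanishing).** For vectors `v j ∈ F_p^n`, exponents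
`0 ≤ t j ≤ p - 1`, and nonzero scalars `λ j`, one has
`∏ j, (1 - g^{λ j • v j})^(t j) = 0` in `F_p[F_p^n]` if and only if
`∏ j, (1 - g^{v j})^(t j) = 0`. -/
theorem stmt_15 (p : ℕ) (hp : p.Prime) (n : ℕ) (hn : 1 ≤ n) (m : ℕ)
    (v : Fin m → (Fin n → ZMod p)) (t : Fin m → ℕ) (ht : ∀ j, t j ≤ p - 1)
    (lam : Fin m → ZMod p) (hlam : ∀ j, lam j ≠ 0) :
    ((∏ j : Fin m, ((1 : AddMonoidAlgebra (ZMod p) (Fin n → ZMod p)) -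
        AddMonoidAlgebra.single (lam j • v j) 1) ^ (t j)) = 0) ↔
    ((∏ j : Fin m, ((1 : AddMonoidAlgebra (ZMod p) (Fin n → ZMod p)) -
        AddMonoidAlgebra.single (v j) 1) ^ (t j)) = 0) := by
  have : Fact p.Prime := ⟨hp⟩
  exact stmt_15_general (ZMod p) Finset.univ v t fun j ↦ Units.mk0 (lam j) (hlam j)
end

section
/- Let p be a prime, n ≥ 1 an integer, and let M = (a_{i,j}) be an n×n matrix over F_p. Let r_1,…,r_n and s_1,…,s_n be integers with 0 ≤ r_i ≤ p−1 and 0 ≤ s_i ≤ p−1 for all i, and assume ∑_{i=1}^n s_i = ∑_{i=1}^n r_i. Then the coefficient of the monomial ∏_{i=1}^n x_i^{s_i} in the polynomial ∏_{i=1}^n (∑_{j=1}^n a_{i,j} x_j)^{r_i} ∈ F_p[x_1,…,x_n] is zero if and only if the coefficient of the monomial ∏_{j=1}^n x_j^{r_j} in the polynomial ∏_{j=1}^n (∑_{i=1}^n a_{i,j} x_i)^{s_j} ∈ F_p[x_1,…,x_n] is zero. (In fact ∏_{i=1}^n r_i! times the second coefficient equals ∏_{i=1}^n s_i! times the first coefficient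 in F_p, and the factorials are nonzero mod p since all r_i, s_i ≤ p−1.) -/
/-!
By the multinomial theorem, the coefficient of `x ^ s` in `∏ i, (∑ j, a i j * x j) ^ r i` is the
sum, over the tables `m` of natural numbers with row sums `r` and column sums `s`, of
`(∏ i, r i ! / ∏ i, ∏ j, m i j !) * ∏ i, ∏ j, a i j ^ m i j`. After multiplication by `∏ j, s j !`
the summand is symmetric under simultaneous transposition of `a` and `m` and exchange of `r` and
`s`, so the two coefficients differ only by products of the factorials `r i !` and `s j !`, which
can be cancelled modulo `p` since all `r i` and `s j` are less than `p`.
-/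

open Finset MvPolynomial
open scoped Nat nonZeroDivisors

section ContingencyTables

variable {ι κ : Type*} [Fintype ι] [Fintype κ]

/-- The contingency tables with margins `r` and `s`: arrays of natural numbers whose rows sum
to `r` and whose columns sum to `s`. They index the terms in the expansion of a product of powers
of linear forms. -/
def contingencyTables [DecidableEq ι] [DecidableEq κ] (r : ι → ℕ) (s : κ → ℕ) :
    Finset (ι → κ → ℕ) :=
  {m ∈ Fintype.piFinset fun i => piAntidiag univ (r i) | ∀ j, ∑ i, m i j = s j}

theorem mem_contingencyTables [DecidableEq ι] [DecidableEq κ] {r : ι → ℕ} {s : κ → ℕ}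
    {m : ι → κ → ℕ} :
    m ∈ contingencyTables r s ↔ (∀ i, ∑ j, m i j = r i) ∧ ∀ j, ∑ i, m i j = s j := by
  simp [contingencyTables]

theorem swap_mem_contingencyTables [DecidableEq ι] [DecidableEq κ] {r : ι → ℕ} {s : κ → ℕ}
    {m : ι → κ → ℕ} :
    Function.swap m ∈ contingencyTables s r ↔ m ∈ contingencyTables r s := by
  simp only [mem_contingencyTables, Function.swap, and_comm]

theorem prod_factorial_mul_prod_multinomial (m : ι → κ → ℕ) :
    (∏ i, ∏ j, (m i j)!) * ∏ i, Nat.multinomial univ (m i) = ∏ i, (∑ j, m i j)! := by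
  simp only [← prod_mul_distrib, Nat.multinomial_spec]

theorem prod_factorial_colSum_mul_prod_multinomial (m : ι → κ → ℕ) :
    (∏ j, (∑ i, m i j)!) * ∏ i, Nat.multinomial univ (m i) =
      (∏ i, (∑ j, m i j)!) * ∏ j, Nat.multinomial univ (Function.swap m j) := by
  have hrow := prod_factorial_mul_prod_multinomial m
  have hcol := prod_factorial_mul_prod_multinomial (Function.swap m)
  simp only [Function.swap] at hcol
  rw [prod_comm] at hcol
  rw [← hrow, ← hcol, mul_right_comm]

end ContingencyTables

theorem natCast_factorial_mem_nonZeroDivisors_of_lt {R : Type*} [Ring R] {p k : ℕ} [CharP R p]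
    (hp : p.Prime) (hk : k < p) : (k ! : R) ∈ R⁰ :=
  have : Fact p.Prime := ⟨hp⟩
  ((IsUnit.natCast_factorial_iff_of_charP p).mpr hk).mem_nonZeroDivisors

section LinearForms

variable {R ι κ : Type*} [CommSemiring R] [Fintype ι] [Fintype κ]

theorem linearForm_pow_eq_sum_monomial [DecidableEq κ] (c : κ → R) (k : ℕ) :
    (∑ j, C (c j) * X j : MvPolynomial κ R) ^ k =
      ∑ m ∈ piAntidiag univ k, monomial (Finsupp.equivFunOnFinite.symm m)
        ((Nat.multinomial univ m : R) * ∏ j, c j ^ m j) := by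
  rw [sum_pow_eq_sum_piAntidiag]
  refine sum_congr rfl fun m _ => ?_
  rw [monomial_eq, Finsupp.prod_fintype _ _ fun _ => pow_zero _]
  simp only [mul_pow, prod_mul_distrib, map_mul, map_prod, map_pow, map_natCast,
    Finsupp.coe_equivFunOnFinite_symm, mul_assoc]

theorem coeff_prod_linearForm_pow [DecidableEq ι] [DecidableEq κ] (a : ι → κ → R)
    (r : ι → ℕ) (s : κ → ℕ) :
    coeff (Finsupp.equivFunOnFinite.symm s) (∏ i, (∑ j, C (a i j) * X j) ^ r i) =
      ∑ m ∈ contingencyTables r s,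
        ((∏ i, Nat.multinomial univ (m i) : ℕ) : R) * ∏ i, ∏ j, a i j ^ m i j := by
  have exponent_eq_iff (m : ι → κ → ℕ) :
      ∑ i, Finsupp.equivFunOnFinite.symm (m i) = Finsupp.equivFunOnFinite.symm s ↔
        ∀ j, ∑ i, m i j = s j := by
    simp only [Finsupp.ext_iff, Finsupp.finsetSum_apply, Finsupp.coe_equivFunOnFinite_symm]
  simp only [linearForm_pow_eq_sum_monomial, prod_univ_sum, ← monomial_sum_prod, coeff_sum,
    coeff_monomial, exponent_eq_iff, ← sum_filter, prod_mul_distrib, Nat.cast_prod,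
    contingencyTables]

theorem prod_factorial_mul_coeff_prod_linearForm_pow (a : ι → κ → R)
    (r : ι → ℕ) (s : κ → ℕ) :
    (∏ j, ((s j)! : R)) *
        coeff (Finsupp.equivFunOnFinite.symm s) (∏ i, (∑ j, C (a i j) * X j) ^ r i) =
      (∏ i, ((r i)! : R)) *
        coeff (Finsupp.equivFunOnFinite.symm r) (∏ j, (∑ i, C (a i j) * X i) ^ s j) := by
  classical
  rw [coeff_prod_linearForm_pow, coeff_prod_linearForm_pow (Function.swap a), mul_sum, mul_sum]
  refine sum_equiv (Equiv.piComm _) (fun m => swap_mem_contingencyTables.symm) fun m hm => ?_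
  obtain ⟨hrow, hcol⟩ := mem_contingencyTables.mp hm
  have hfactorial := prod_factorial_colSum_mul_prod_multinomial m
  simp only [hrow, hcol] at hfactorial
  have hmonomial : ∏ i, ∏ j, a i j ^ m i j = ∏ j, ∏ i, a i j ^ m i j := prod_comm
  rw [hmonomial, ← mul_assoc, ← mul_assoc]
  exact_mod_cast congrArg (fun k : ℕ => (k : R) * ∏ j, ∏ i, a i j ^ m i j) hfactorial

theorem stmt_16_general (a : ι → κ → R) (r : ι → ℕ) (s : κ → ℕ)
    (hr : ∀ i, ((r i)! : R) ∈ R⁰) (hs : ∀ j, ((s j)! : R) ∈ R⁰) :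
    coeff (Finsupp.equivFunOnFinite.symm s) (∏ i, (∑ j, C (a i j) * X j) ^ r i) = 0 ↔
      coeff (Finsupp.equivFunOnFinite.symm r) (∏ j, (∑ i, C (a i j) * X i) ^ s j) = 0 := by
  have hr_prod : ∏ i, ((r i)! : R) ∈ R⁰ := prod_mem fun i _ => hr i
  have hs_prod : ∏ j, ((s j)! : R) ∈ R⁰ := prod_mem fun j _ => hs j
  rw [← mul_left_mem_nonZeroDivisors_eq_zero_iff hs_prod,
    prod_factorial_mul_coeff_prod_linearForm_pow,
    mul_left_mem_nonZeroDivisors_eq_zero_iff hr_prod]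

end LinearForms

/-- **Lemma (duality of polynomial coefficients).** Let `a` be an `n × n` matrix over `F_p`
and `r, s : Fin n → ℕ` with `r i, s i ≤ p - 1` and `∑ s = ∑ r`. Then the coefficient of
`∏ x i ^ s i` in `∏ i, (∑ j, a i j * x j)^(r i)` vanishes iff the coefficient of
`∏ x j ^ r j` in `∏ j, (∑ i, a i j * x i)^(s j)` vanishes. -/
theorem stmt_16 (p : ℕ) (hp : p.Prime) (n : ℕ) (hn : 1 ≤ n)
    (a : Matrix (Fin n) (Fin n) (ZMod p))
    (r s : Fin n → ℕ) (hr : ∀ i, r i ≤ p - 1) (hs : ∀ i, s i ≤ p - 1)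
    (hsum : ∑ i, s i = ∑ i, r i) :
    (MvPolynomial.coeff (Finsupp.equivFunOnFinite.symm s)
        (∏ i : Fin n, (∑ j : Fin n, MvPolynomial.C (a i j) * MvPolynomial.X j) ^ (r i)) = 0)
    ↔
    (MvPolynomial.coeff (Finsupp.equivFunOnFinite.symm r)
        (∏ j : Fin n, (∑ i : Fin n, MvPolynomial.C (a i j) * MvPolynomial.X i) ^ (s j)) = 0)
    := by
  exact stmt_16_general a r s
    (fun i => natCast_factorial_mem_nonZeroDivisors_of_lt hp (Nat.lt_of_le_pred hp.pos (hr i)))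
    fun j => natCast_factorial_mem_nonZeroDivisors_of_lt hp (Nat.lt_of_le_pred hp.pos (hs j))
end

section
/- Let p > 3 be a prime, n ≥ 1 an integer, and M = (a_{i,j}) a nonsingular n×n matrix over F_p. Then the following are equivalent: (i) there is no vector x ∈ F_p^n with x_i ≠ 0 for all 1 ≤ i ≤ n and (Mx)_i ≠ 0 for all 1 ≤ i ≤ n; (ii) for all integers r_1,…,r_n, s_1,…,s_n with 1 ≤ r_i ≤ p−1 and 1 ≤ s_i ≤ p−1 for all i, one has ∑_{x ∈ F_p^n} ∏_{i=1}^n (∑_{j=1}^n a_{i,j} x_j)^{r_i} · ∏_{i=1}^n x_i^{s_i} = 0 in F_p. -/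
/-!
For `z` in a field with `q` elements, `∑ 1 ≤ k ≤ q - 1, z ^ k` is `-1` if `z = 1` and `0` otherwise,
because `z ^ q = z`. Hence, for `a` with no zero coordinate, the monomials whose exponents lie in
`[1, q - 1]` combine to a nonzero multiple of the indicator function of `a`, so the power moments of
a function with these exponents determine its values at all such points. Applied to the functions
`x ↦ ∏ j, (M x) j ^ r j`, this says that their moments all vanish exactly when, at every `x` with no
zero coordinate, some coordinate of `M x` is zero.
-/

open Finset

theorem forall_prod_pow_eq_zero_iff {κ R : Type*} [Fintype κ] [CommMonoidWithZero R] [Nontrivial R]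
    [NoZeroDivisors R] {N : ℕ} (hN : 1 ≤ N) (y : κ → R) :
    (∀ r : κ → ℕ, (∀ j, r j ∈ Icc 1 N) → ∏ j, y j ^ r j = 0) ↔ ∃ j, y j = 0 := by
  constructor
  · intro h
    simpa [prod_eq_zero_iff] using h (fun _ ↦ 1) fun _ ↦ left_mem_Icc.mpr hN
  · rintro ⟨j, hj⟩ r hr
    refine prod_eq_zero (mem_univ j) ?_
    rw [hj, zero_pow (Nat.one_le_iff_ne_zero.mp (mem_Icc.mp (hr j)).1)]

section FiniteField

variable {K ι : Type*} [Field K] [Fintype K] [Fintype ι] [DecidableEq ι]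

local notation "q" => Fintype.card K

theorem sum_Icc_one_card_sub_one_pow [DecidableEq K] (z : K) :
    ∑ k ∈ Icc 1 (q - 1), z ^ k = if z = 1 then -1 else 0 := by
  have hq : 1 ≤ q := Fintype.card_pos
  split_ifs with hz
  · simp [hz, Nat.cast_sub hq]
  · rw [Icc_sub_one_right_eq_Ico_of_not_isMin (by simp), geom_sum_Ico hz hq,
      FiniteField.pow_card, pow_one, sub_self, zero_div]

theorem sum_prod_inv_mul_pow [DecidableEq K] {a : ι → K} (ha : ∀ i, a i ≠ 0) (x : ι → K) :
    ∑ s ∈ Fintype.piFinset fun _ : ι ↦ Icc 1 (q - 1), ∏ i, ((a i)⁻¹ * x i) ^ s i =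
      if x = a then (-1) ^ Fintype.card ι else 0 := by
  have inv_mul_eq_one_iff (i : ι) : (a i)⁻¹ * x i = 1 ↔ x i = a i := by
    rw [inv_mul_eq_one₀ (ha i), eq_comm]
  rw [← prod_univ_sum]
  simp only [sum_Icc_one_card_sub_one_pow, inv_mul_eq_one_iff, Fintype.prod_ite_zero,
    ← funext_iff, prod_const, card_univ]

/-- The moment of multi-exponent `s` of the weight function `w` on `K ^ ι`. Moments with all
exponents between `1` and `q - 1` detect the values of `w` at points with no zero coordinate. -/
def powerMoment (w : (ι → K) → K) (s : ι → ℕ) : K :=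
  ∑ x, w x * ∏ i, x i ^ s i

theorem sum_prod_inv_pow_mul_powerMoment (w : (ι → K) → K) {a : ι → K} (ha : ∀ i, a i ≠ 0) :
    ∑ s ∈ Fintype.piFinset fun _ : ι ↦ Icc 1 (q - 1), (∏ i, (a i)⁻¹ ^ s i) * powerMoment w s =
      (-1) ^ Fintype.card ι * w a := by
  classical
  calc
    _ = ∑ x, w x * ∑ s ∈ Fintype.piFinset fun _ : ι ↦ Icc 1 (q - 1),
          ∏ i, ((a i)⁻¹ * x i) ^ s i := by
      simp only [powerMoment, mul_sum, mul_pow, prod_mul_distrib, mul_left_comm]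
      exact sum_comm
    _ = (-1) ^ Fintype.card ι * w a := by
      simp only [sum_prod_inv_mul_pow ha, mul_ite, mul_zero, Fintype.sum_ite_eq']
      exact mul_comm _ _

theorem forall_powerMoment_eq_zero_iff (w : (ι → K) → K) :
    (∀ s : ι → ℕ, (∀ i, s i ∈ Icc 1 (q - 1)) → powerMoment w s = 0) ↔
      ∀ x, (∀ i, x i ≠ 0) → w x = 0 := by
  constructor
  · intro moments_zero a ha
    have h : (-1) ^ Fintype.card ι * w a = 0 := by
      rw [← sum_prod_inv_pow_mul_powerMoment w ha]
      refine sum_eq_zero fun s hs ↦ ?_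
      rw [moments_zero s (Fintype.mem_piFinset.mp hs), mul_zero]
    simpa using h
  · intro hw s hs
    refine sum_eq_zero fun x _ ↦ ?_
    by_cases hx : ∀ i, x i ≠ 0
    · rw [hw x hx, zero_mul]
    · have hN : 1 ≤ q - 1 := Nat.le_sub_one_of_lt Fintype.one_lt_card
      rw [(forall_prod_pow_eq_zero_iff hN x).mpr (not_forall_not.mp hx) s hs, mul_zero]

theorem stmt_17_general {κ : Type*} [Fintype κ] (f : (ι → K) → κ → K) :
    (¬ ∃ x : ι → K, (∀ i, x i ≠ 0) ∧ ∀ j, f x j ≠ 0) ↔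
      ∀ (r : κ → ℕ) (s : ι → ℕ), (∀ j, r j ∈ Icc 1 (q - 1)) → (∀ i, s i ∈ Icc 1 (q - 1)) →
        ∑ x : ι → K, (∏ j, f x j ^ r j) * ∏ i, x i ^ s i = 0 := by
  have hN : 1 ≤ q - 1 := Nat.le_sub_one_of_lt Fintype.one_lt_card
  calc
    _ ↔ ∀ x, (∀ i, x i ≠ 0) → ∃ j, f x j = 0 := by push Not; rfl
    _ ↔ ∀ r : κ → ℕ, (∀ j, r j ∈ Icc 1 (q - 1)) →
          ∀ x, (∀ i, x i ≠ 0) → ∏ j, f x j ^ r j = 0 := by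
      simp only [← forall_prod_pow_eq_zero_iff hN]
      exact ⟨fun h r hr x hx ↦ h x hx r hr, fun h x hx r hr ↦ h r hr x hx⟩
    _ ↔ _ := by
      simp only [← forall_powerMoment_eq_zero_iff, powerMoment]
      exact ⟨fun h r s hr ↦ h r hr s, fun h r hr s ↦ h r s hr⟩

end FiniteField

/-- **Lemma (polynomial characterisation of (P'1)).** Let `p > 3` be prime and `M` a
nonsingular `n × n` matrix over `F_p`. Then there is no vector `x` with all `x i ≠ 0` and
all `(Mx) i ≠ 0` if and only if for all exponents `1 ≤ r i ≤ p - 1`, `1 ≤ s i ≤ p - 1`,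
`∑_x ∏ i ((Mx) i)^(r i) * ∏ i (x i)^(s i) = 0` in `F_p`. -/
theorem stmt_17 (p : ℕ) [hp : Fact p.Prime] (hp3 : 3 < p) (n : ℕ) (hn : 1 ≤ n)
    (M : Matrix (Fin n) (Fin n) (ZMod p)) (hM : IsUnit M.det) :
    (¬ ∃ x : Fin n → ZMod p, (∀ i, x i ≠ 0) ∧ (∀ i, M.mulVec x i ≠ 0)) ↔
    (∀ r s : Fin n → ℕ,
      (∀ i, 1 ≤ r i ∧ r i ≤ p - 1) → (∀ i, 1 ≤ s i ∧ s i ≤ p - 1) →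
      ∑ x : Fin n → ZMod p,
        (∏ i : Fin n, (M.mulVec x i) ^ (r i)) * ∏ i : Fin n, (x i) ^ (s i) = 0) := by
  simpa only [mem_Icc, ZMod.card] using stmt_17_general M.mulVec
end

section
/- Let p > 3 be a prime. Then the following two statements are equivalent: (a) for every integer n ≥ 1 and every nonsingular n×n matrix M over F_p with row vectors a_1,…,a_n, if ∏_{i=1}^n (1 − g^{e_i}) · ∏_{i=1}^n (1 − g^{a_i}) = 0 in F_p[F_p^n] then ∏_{i=1}^n (1 − g^{e_i}) · ∏_{i=1}^n (1 − g^{a_i}) = 0 in ℤ[F_p^n]; (b) there do not exist an integer n ≥ 1 and a nonsingular n×n matrix M over F_p with row vectors a_1,…,a_n such that σ_{2n−i}((1 − g^{e_1}),…,(1 − g^{e_n}),(1 − g^{a_1}),…,(1 − g^{a_n})) = 0 in F_p[F_p^n] for every integer i with 0 ≤ i ≤ p−1, where σ_j denotes the j-th elementary symmetric polynomial evaluated at the 2n listed group-algebra elements, with the convention that σ_j = 0 for j < 0. -/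
/-!
In characteristic `p` the substitution `g ↦ 1 + X` identifies the group algebra of `ℤ/p` with the
polynomials modulo `X ^ p`. The symmetric functions `σ_{m - i}`, `i < p`, of `1 - g^{v_1}, …,
1 - g^{v_m}` are the low coefficients of `∏ (X + 1 - g^{v_i})`, so they all vanish exactly when
`∏ (1 - g^{(v_i, 1)}) = 0` in the group algebra of `V × F_p`: the product vanishes after the vectors
have been moved to the affine hyperplane at height `1`.

In characteristic zero, evaluation at the characters of `V` shows that `∏ (1 - g^{v_i}) ≠ 0`
exactly when some linear functional vanishes at none of the `v_i`. Such a functional `L` allows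
the `v_i` to be rescaled to `L = 1`, which keeps a product that vanishes modulo `p` zero because
`1 - g^v` divides `1 - g^{cv}`. Conversely the vectors `(v_i, 1)` of `V × F_p` come with such a
functional, the height.
-/

open Polynomial
open scoped AddMonoidAlgebra

theorem X_pow_dvd_prod_X_add_C_iff_esymm_eq_zero {R : Type*} [CommSemiring R]
    (s : Multiset R) (k : ℕ) :
    (X : R[X]) ^ k ∣ (s.map fun r => X + C r).prod ↔
      ∀ i < k, i ≤ s.card → s.esymm (s.card - i) = 0 := by
  rw [X_pow_dvd_iff]
  refine forall₂_congr fun i _ => ?_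
  rcases le_or_gt i s.card with hi | hi
  · rw [Multiset.prod_X_add_C_coeff s hi, imp_iff_right hi]
  · have hdeg : (s.map fun r => X + C r).prod.natDegree ≤ s.card := by
      refine (natDegree_multiset_prod_le _).trans ?_
      simpa only [Multiset.card_map, smul_eq_mul, mul_one] using
        Multiset.sum_le_card_nsmul ((s.map fun r => X + C r).map natDegree) 1 (by
          simp only [Multiset.mem_map]
          rintro _ ⟨_, ⟨r, -, rfl⟩, rfl⟩
          exact natDegree_add_C.trans_le natDegree_X_le)
    simp [coeff_eq_zero_of_natDegree_lt (hdeg.trans_lt hi), hi.not_ge]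

/-- The element `1 - g^v` of the group algebra `R[G]`. -/
noncomputable def oneSub (R : Type*) {G : Type*} [Ring R] [AddMonoid G] (v : G) : R[G] :=
  1 - AddMonoidAlgebra.single v 1

section GroupAlgebra

variable {R S G H ι κ : Type*} [CommRing R] [CommRing S] [AddCommMonoid G] [AddCommMonoid H]
  [Fintype ι] [Fintype κ]

theorem mapDomainRingHom_oneSub (f : G →+ H) (v : G) :
    AddMonoidAlgebra.mapDomainRingHom R f (oneSub R v) = oneSub R (f v) := by
  simp only [oneSub, map_sub, map_one]
  simp

theorem mapRingHom_oneSub (f : R →+* S) (v : G) :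
    AddMonoidAlgebra.mapRingHom G f (oneSub R v) = oneSub S v := by
  simp [oneSub]

theorem prod_oneSub_map_eq_zero (f : G →+ H) {v : ι → G} (h : ∏ i, oneSub R (v i) = 0) :
    ∏ i, oneSub R (f (v i)) = 0 := by
  simp only [← mapDomainRingHom_oneSub, ← map_prod, h, map_zero]

theorem prod_oneSub_eq_zero_iff_of_injective {f : R →+* S} (hf : Function.Injective f)
    (v : ι → G) : ∏ i, oneSub R (v i) = 0 ↔ ∏ i, oneSub S (v i) = 0 := by
  simp only [← mapRingHom_oneSub f, ← map_prod]
  exact (map_eq_zero_iff _ (AddMonoidAlgebra.map_injective (f : R →+ S) hf)).symm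

theorem prod_oneSub_eq_zero_of_comp {e : ι → κ} (he : Function.Injective e) {v : κ → G}
    (h : ∏ i, oneSub R (v (e i)) = 0) : ∏ j, oneSub R (v j) = 0 := by
  refine zero_dvd_iff.mp (h ▸ ?_)
  simpa using Finset.prod_dvd_prod_of_subset (Finset.univ.map ⟨e, he⟩) Finset.univ
    (fun j => oneSub R (v j)) (Finset.subset_univ _)

theorem oneSub_dvd_oneSub_nsmul (k : ℕ) (v : G) : oneSub R v ∣ oneSub R (k • v) := by
  simpa [oneSub, AddMonoidAlgebra.single_pow] using
    one_sub_dvd_one_sub_pow (AddMonoidAlgebra.single v 1 : R[G]) k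

theorem prod_oneSub_nsmul_eq_zero (k : ι → ℕ) {v : ι → G} (h : ∏ i, oneSub R (v i) = 0) :
    ∏ i, oneSub R (k i • v i) = 0 :=
  zero_dvd_iff.mp <| h ▸ Finset.prod_dvd_prod_of_dvd _ _ fun i _ => oneSub_dvd_oneSub_nsmul (k i) _

end GroupAlgebra

theorem charP_addMonoidAlgebra (R G : Type*) [CommRing R] [AddMonoid G] (p : ℕ) [CharP R p] :
    CharP R[G] p :=
  charP_of_injective_algebraMap (FaithfulSMul.algebraMap_injective R R[G]) p

theorem exists_algHom_single_prodMk_one {N : ℕ} [NeZero N] {R G A : Type*} [CommRing R]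
    [AddCommMonoid G] [CommRing A] [Algebra R A] (j : R[G] →ₐ[R] A) {w : A} (hw : w ^ N = 1) :
    ∃ Φ : R[G × ZMod N] →ₐ[R] A, ∀ u : G,
      Φ (AddMonoidAlgebra.single (u, 1) 1) = j (AddMonoidAlgebra.single u 1) * w := by
  let F : Multiplicative (G × ZMod N) →* A :=
    ((j : R[G] →* A).comp (AddMonoidAlgebra.of R G)).comp
      (AddMonoidHom.fst G (ZMod N)).toMultiplicative *
    (AddChar.zmodChar N hw).toMonoidHom.comp (AddMonoidHom.snd G (ZMod N)).toMultiplicative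
  refine ⟨AddMonoidAlgebra.lift R A _ F, fun u => ?_⟩
  have hone : AddChar.zmodChar N hw 1 = w := by
    simpa using AddChar.zmodChar_apply' hw 1
  simp [F, hone]

section CharP

variable {p : ℕ} [Fact p.Prime] {R G ι : Type*} [CommRing R] [CharP R p] [AddCommMonoid G]
  [Fintype ι]

theorem prod_oneSub_prodMk_one_eq_zero {v : ι → G}
    (h : X ^ p ∣ ∏ i, (X + C (oneSub R (v i)))) :
    ∏ i, oneSub R ((v i, 1) : G × ZMod p) = 0 := by
  have : CharP R[G × ZMod p] p := charP_addMonoidAlgebra R _ p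
  let g : ZMod p → R[G × ZMod p] := fun t => AddMonoidAlgebra.single (0, t) 1
  let Ψ : R[G][X] →+* R[G × ZMod p] :=
    eval₂RingHom (AddMonoidAlgebra.mapDomainRingHom R (AddMonoidHom.inl G (ZMod p))) (g (-1) - 1)
  have hX : Ψ (X ^ p) = 0 := by
    have hg : g (-1) ^ p = 1 := by
      simp [g, AddMonoidAlgebra.single_pow, AddMonoidAlgebra.one_def, Prod.mk_zero_zero]
    simp [Ψ, sub_pow_char, hg]
  have hfactor (u : G) : oneSub R ((u, 1) : G × ZMod p) = g 1 * Ψ (X + C (oneSub R u)) := by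
    have hg : g 1 * g (-1) = 1 := by
      simp [g, AddMonoidAlgebra.single_mul_single, AddMonoidAlgebra.one_def, Prod.mk_zero_zero]
    have hΨ : Ψ (X + C (oneSub R u)) = g (-1) - AddMonoidAlgebra.single (u, 0) 1 := by
      simp only [Ψ, coe_eval₂RingHom, eval₂_add, eval₂_X, eval₂_C, mapDomainRingHom_oneSub]
      simp [oneSub]
    rw [hΨ, mul_sub, hg]
    simp [g, oneSub, AddMonoidAlgebra.single_mul_single]
  have hzero : Ψ (∏ i, (X + C (oneSub R (v i)))) = 0 := by
    obtain ⟨q, hq⟩ := h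
    rw [hq, map_mul, hX, zero_mul]
  simp_rw [hfactor, Finset.prod_mul_distrib, ← map_prod, hzero, mul_zero]

theorem X_pow_dvd_prod_X_add_C_oneSub {v : ι → G}
    (h : ∏ i, oneSub R ((v i, 1) : G × ZMod p) = 0) :
    X ^ p ∣ ∏ i, (X + C (oneSub R (v i))) := by
  have : CharP R[G] p := charP_addMonoidAlgebra R G p
  let q := (AdjoinRoot.mkₐ (X ^ p : R[G][X])).restrictScalars R
  have hpow : q (1 + X) ^ p = 1 := by
    rw [← map_pow, add_pow_char, one_pow, map_add, map_one]
    exact add_eq_left.mpr AdjoinRoot.mk_self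
  obtain ⟨w, hw, hinv⟩ : ∃ w, w ^ p = 1 ∧ q (1 + X) * w = 1 :=
    ⟨q (1 + X) ^ (p - 1), by rw [pow_right_comm, hpow, one_pow],
      by rw [mul_pow_sub_one (NeZero.ne p), hpow]⟩
  obtain ⟨Φ, hΦ⟩ := exists_algHom_single_prodMk_one (q.comp CAlgHom) hw
  have hfactor (u : G) : q (X + C (oneSub R u)) = q (1 + X) * Φ (oneSub R (u, 1)) := by
    rw [oneSub, oneSub, map_sub Φ, map_one, hΦ, mul_sub, mul_left_comm, hinv]
    simp only [AlgHom.comp_apply, CAlgHom_apply, map_sub, map_add, map_one]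
    ring
  have hzero : q (∏ i, (X + C (oneSub R (v i)))) = 0 := by
    simp_rw [map_prod, hfactor, Finset.prod_mul_distrib, ← map_prod Φ, h, map_zero, mul_zero]
  exact AdjoinRoot.mk_eq_zero.mp hzero

theorem X_pow_dvd_prod_X_add_C_oneSub_iff (v : ι → G) :
    X ^ p ∣ ∏ i, (X + C (oneSub R (v i))) ↔ ∏ i, oneSub R ((v i, 1) : G × ZMod p) = 0 :=
  ⟨prod_oneSub_prodMk_one_eq_zero, X_pow_dvd_prod_X_add_C_oneSub⟩

theorem prod_oneSub_prodMk_one_eq_zero_iff_esymm (v : ι → G) :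
    ∏ i, oneSub R ((v i, 1) : G × ZMod p) = 0 ↔ ∀ i < p, i ≤ Fintype.card ι →
      (Finset.univ.val.map fun j => oneSub R (v j)).esymm (Fintype.card ι - i) = 0 := by
  simpa only [Multiset.map_map, Function.comp_def, Multiset.card_map, Finset.card_val,
    Finset.card_univ, X_pow_dvd_prod_X_add_C_oneSub_iff, Finset.prod_map_val] using
    X_pow_dvd_prod_X_add_C_iff_esymm_eq_zero (Finset.univ.val.map fun j => oneSub R (v j)) p

end CharP

section Characters

theorem eq_zero_of_forall_lift_addChar_eq_zero {G : Type*} [AddCommGroup G] [Finite G] {f : ℂ[G]}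
    (h : ∀ χ : AddChar G ℂ, AddMonoidAlgebra.lift ℂ ℂ G χ.toMonoidHom f = 0) : f = 0 := by
  have : Fintype G := Fintype.ofFinite G
  have hpairing : Fintype.linearCombination ℂ (f.coeff : G → ℂ) = 0 :=
    (AddChar.complexBasis G).ext fun χ => by
      simpa [Fintype.linearCombination_apply, AddMonoidAlgebra.lift_apply, Finsupp.sum_fintype,
        mul_comm] using h χ
  classical
  ext w
  simpa using LinearMap.congr_fun hpairing (Pi.single w 1)

theorem prod_oneSub_complex_ne_zero_iff {G ι : Type*} [AddCommGroup G] [Finite G] [Fintype ι]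
    (v : ι → G) :
    ∏ i, oneSub ℂ (v i) ≠ 0 ↔ ∃ χ : AddChar G ℂ, ∀ i, χ (v i) ≠ 1 := by
  have hlift (χ : AddChar G ℂ) :
      AddMonoidAlgebra.lift ℂ ℂ G χ.toMonoidHom (∏ i, oneSub ℂ (v i)) ≠ 0 ↔
        ∀ i, χ (v i) ≠ 1 := by
    simp [oneSub, map_prod, Finset.prod_ne_zero_iff, sub_eq_zero, eq_comm (a := (1 : ℂ))]
  simp_rw [← hlift]
  refine ⟨fun hne => ?_, fun ⟨χ, hχ⟩ h0 => hχ (by rw [h0, map_zero])⟩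
  contrapose! hne
  exact eq_zero_of_forall_lift_addChar_eq_zero hne

theorem exists_dual_addChar_eq_stdAddChar {N : ℕ} [NeZero N] {V : Type*} [AddCommGroup V]
    [Module (ZMod N) V] (χ : AddChar V ℂ) :
    ∃ L : Module.Dual (ZMod N) V, ∀ v, χ v = ZMod.stdAddChar (L v) := by
  have hroot (v : V) : ∃ a : ZMod N, ZMod.stdAddChar a = χ v := by
    have hpow : χ v ^ N = 1 := by
      rw [← AddChar.map_nsmul_eq_pow, ← Nat.cast_smul_eq_nsmul (ZMod N)]
      simp
    obtain ⟨k, -, hk⟩ :=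
      (Complex.isPrimitiveRoot_exp N (NeZero.ne N)).eq_pow_of_pow_eq_one hpow
    have hone : ZMod.stdAddChar (1 : ZMod N) = Complex.exp (2 * Real.pi * Complex.I / N) := by
      simpa using ZMod.stdAddChar_coe (N := N) 1
    exact ⟨k • 1, by rw [AddChar.map_nsmul_eq_pow, hone, hk]⟩
  choose L hL using hroot
  let L' : V →+ ZMod N := AddMonoidHom.mk' L fun v w => ZMod.injective_stdAddChar <| by
    rw [AddChar.map_add_eq_mul, hL, hL, hL, AddChar.map_add_eq_mul]
  exact ⟨L'.toZModLinearMap N, fun v => (hL v).symm⟩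

theorem prod_oneSub_ne_zero_iff_exists_dual {N : ℕ} [NeZero N] {S V ι : Type*} [CommRing S]
    [CharZero S] [AddCommGroup V] [Finite V] [Module (ZMod N) V] [Fintype ι] (v : ι → V) :
    ∏ i, oneSub S (v i) ≠ 0 ↔ ∃ L : Module.Dual (ZMod N) V, ∀ i, L (v i) ≠ 0 := by
  rw [Ne, ← prod_oneSub_eq_zero_iff_of_injective (Int.castRingHom S).injective_int,
    prod_oneSub_eq_zero_iff_of_injective (Int.castRingHom ℂ).injective_int, ← Ne,
    prod_oneSub_complex_ne_zero_iff]
  constructor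
  · rintro ⟨χ, hχ⟩
    obtain ⟨L, hL⟩ := exists_dual_addChar_eq_stdAddChar (N := N) χ
    exact ⟨L, fun i h => hχ i (by simp [hL, h])⟩
  · rintro ⟨L, hL⟩
    refine ⟨ZMod.stdAddChar.compAddMonoidHom L.toAddMonoidHom, fun i h => hL i ?_⟩
    exact ZMod.injective_stdAddChar (by simpa using h)

end Characters

section Bordered

variable {F : Type*} [CommRing F]

/-- The rows of the identity matrix followed by the rows of `M`. -/
def basisAndRows {n : Type*} [DecidableEq n] (M : Matrix n n F) : n ⊕ n → n → F
  | .inl i => Pi.single i 1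
  | .inr i => M i

/-- The linear isomorphism `F^n × F ≅ F^(n+1)` sending `(0, 1)` to `e_0` and `(e_j, 1)` to
`e_{j+1}`, which turns the last component (the height) into the sum of the coordinates. Only its
additivity is recorded. -/
def toBarycentric (n : ℕ) : (Fin n → F) × F →+ (Fin (n + 1) → F) where
  toFun w := Fin.cons (w.2 - ∑ j, w.1 j) w.1
  map_zero' := by ext i; refine Fin.cases ?_ (fun j => ?_) i <;> simp
  map_add' a b := by
    ext i
    refine Fin.cases ?_ (fun j => ?_) i
    · simp [Finset.sum_add_distrib, add_sub_add_comm]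
    · simp

theorem sum_toBarycentric {n : ℕ} (w : (Fin n → F) × F) : ∑ j, toBarycentric n w j = w.2 := by
  simp [toBarycentric, Fin.sum_univ_succ]

theorem toBarycentric_single_one {n : ℕ} (i : Fin n) :
    toBarycentric n (Pi.single i (1 : F), 1) = Pi.single i.succ 1 := by
  ext k
  refine Fin.cases ?_ (fun k => ?_) k <;> simp [toBarycentric, Pi.single_apply]

/-- The matrix with first row `e_0` and further rows the images of `(a_i, 1)` under `toBarycentric`,
where the `a_i` are the rows of `M`. All its rows have coordinate sum `1`. -/
def bordered {n : ℕ} (M : Matrix (Fin n) (Fin n) F) : Matrix (Fin (n + 1)) (Fin (n + 1)) F :=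
  Fin.cons (Pi.single 0 1) fun i => toBarycentric n (M i, 1)

theorem det_bordered {n : ℕ} (M : Matrix (Fin n) (Fin n) F) : (bordered M).det = M.det := by
  have hminor : (bordered M).submatrix Fin.succ Fin.succ = M := rfl
  have hrow : bordered M 0 = Pi.single 0 1 := rfl
  simp [Matrix.det_succ_row_zero, Fin.sum_univ_succ, hrow, hminor]

theorem basisAndRows_bordered_succ {n : ℕ} (M : Matrix (Fin n) (Fin n) F) (i : Fin n ⊕ Fin n) :
    basisAndRows (bordered M) (i.map Fin.succ Fin.succ) =
      toBarycentric n (basisAndRows M i, 1) := by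
  rcases i with i | i
  · exact (toBarycentric_single_one i).symm
  · rfl

theorem sum_basisAndRows_bordered {n : ℕ} (M : Matrix (Fin n) (Fin n) F)
    (i : Fin (n + 1) ⊕ Fin (n + 1)) : ∑ j, basisAndRows (bordered M) i j = 1 := by
  rcases i with i | i
  · simp [basisAndRows]
  · refine Fin.cases ?_ (fun i => ?_) i
    · simp [basisAndRows, bordered]
    · exact sum_toBarycentric _

end Bordered

section AffineRescale

variable {F n : Type*} [Field F] [Fintype n] [DecidableEq n]

/-- The matrix `M` with column `j` multiplied by `L e_j` and row `i` divided by `L a_i`, where the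
`a_i` are the rows of `M`: in the coordinates in which the vectors `e_j / L e_j` form the standard
basis, its rows are the `a_i` rescaled to `L = 1`. -/
def affineRescale (L : Module.Dual F (n → F)) (M : Matrix n n F) : Matrix n n F :=
  Matrix.diagonal (fun i => (L (M i))⁻¹) * M * Matrix.diagonal fun j => L (Pi.single j 1)

theorem isUnit_det_affineRescale {L : Module.Dual F (n → F)} {M : Matrix n n F}
    (hM : IsUnit M.det) (hL : ∀ i, L (basisAndRows M i) ≠ 0) :
    IsUnit (affineRescale L M).det := by
  have hrows : ∏ i, L (M i) ≠ 0 := Finset.prod_ne_zero_iff.mpr fun i _ => hL (.inr i)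
  have hbasis : ∏ j, L (Pi.single j 1) ≠ 0 := Finset.prod_ne_zero_iff.mpr fun j _ => hL (.inl j)
  simp [affineRescale, hrows, hbasis, hM.ne_zero]

theorem basisAndRows_affineRescale {L : Module.Dual F (n → F)} {M : Matrix n n F}
    (hL : ∀ i, L (basisAndRows M i) ≠ 0) (i : n ⊕ n) :
    basisAndRows (affineRescale L M) i =
      (L (basisAndRows M i))⁻¹ • (basisAndRows M i * fun j => L (Pi.single j 1)) := by
  ext k
  rcases i with i | i
  · have hi : L (Pi.single i 1) ≠ 0 := hL (.inl i)
    rcases eq_or_ne k i with rfl | hk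
    · simp [basisAndRows, hi]
    · simp [basisAndRows, hk]
  · simp [basisAndRows, affineRescale, Matrix.mul_diagonal, Matrix.diagonal_mul, mul_assoc]

end AffineRescale

section Reduction

variable {R F : Type*} [CommRing R]

theorem prod_oneSub_basisAndRows [CommRing F] {n : Type*} [Fintype n] [DecidableEq n]
    (M : Matrix n n F) :
    ∏ i, oneSub R (basisAndRows M i) =
      (∏ i, oneSub R (Pi.single i 1)) * ∏ i, oneSub R (M i) :=
  Fintype.prod_sum_type _

theorem prod_oneSub_basisAndRows_bordered_eq_zero [CommRing F] {n : ℕ}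
    {M : Matrix (Fin n) (Fin n) F} (h : ∏ i, oneSub R (basisAndRows M i, (1 : F)) = 0) :
    ∏ i, oneSub R (basisAndRows (bordered M) i) = 0 := by
  refine prod_oneSub_eq_zero_of_comp (e := Sum.map Fin.succ Fin.succ)
    ((Fin.succ_injective n).sumMap (Fin.succ_injective n)) ?_
  simpa only [basisAndRows_bordered_succ] using prod_oneSub_map_eq_zero (toBarycentric n) h

variable {p : ℕ} [Fact p.Prime]

theorem prod_oneSub_basisAndRows_affineRescale_eq_zero {n : Type*} [Fintype n] [DecidableEq n]
    {L : Module.Dual (ZMod p) (n → ZMod p)} {M : Matrix n n (ZMod p)}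
    (hL : ∀ i, L (basisAndRows M i) ≠ 0) (h : ∏ i, oneSub R (basisAndRows M i) = 0) :
    ∏ i, oneSub R (basisAndRows (affineRescale L M) i, (1 : ZMod p)) = 0 := by
  let T : (n → ZMod p) →+ (n → ZMod p) × ZMod p :=
    (AddMonoidHom.mulRight fun j => L (Pi.single j 1)).prod L.toAddMonoidHom
  have hT (i : n ⊕ n) : (basisAndRows (affineRescale L M) i, (1 : ZMod p)) =
      (L (basisAndRows M i))⁻¹.val • T (basisAndRows M i) := by
    rw [← Nat.cast_smul_eq_nsmul (ZMod p), ZMod.natCast_zmod_val, basisAndRows_affineRescale hL]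
    simp [T, hL i]
  simpa only [hT] using prod_oneSub_nsmul_eq_zero _ (prod_oneSub_map_eq_zero T h)

theorem forall_esymm_oneSub_eq_zero_iff [CharP R p] {n : ℕ} (M : Matrix (Fin n) (Fin n) (ZMod p)) :
    (∀ i : ℕ, i ≤ p - 1 →
      (if i ≤ 2 * n then
        ((Finset.univ : Finset (Fin n)).val.map (fun j => oneSub R (Pi.single j (1 : ZMod p))) +
          (Finset.univ : Finset (Fin n)).val.map (fun j => oneSub R (M j))).esymm (2 * n - i)
      else 0) = 0) ↔
    ∏ i, oneSub R (basisAndRows M i, (1 : ZMod p)) = 0 := by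
  have hmap : Finset.univ.val.map (fun i => oneSub R (basisAndRows M i)) =
      Finset.univ.val.map (fun j => oneSub R (Pi.single j (1 : ZMod p))) +
        Finset.univ.val.map (fun j => oneSub R (M j)) := by
    rw [← Finset.univ_disjSum_univ, Finset.val_disjSum, Multiset.map_disjSum]
    rfl
  rw [prod_oneSub_prodMk_one_eq_zero_iff_esymm, hmap]
  simp [Nat.le_sub_one_iff_lt (NeZero.pos p), two_mul]

end Reduction

theorem stmt_19_general (p : ℕ) [Fact p.Prime] (R S : Type*) [CommRing R] [CharP R p]
    [CommRing S] [CharZero S] :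
    (∀ n : ℕ, 1 ≤ n → ∀ M : Matrix (Fin n) (Fin n) (ZMod p), IsUnit M.det →
      (∏ i, oneSub R (Pi.single i (1 : ZMod p))) * (∏ i, oneSub R (M i)) = 0 →
      (∏ i, oneSub S (Pi.single i (1 : ZMod p))) * (∏ i, oneSub S (M i)) = 0) ↔
    ¬ ∃ n : ℕ, 1 ≤ n ∧ ∃ M : Matrix (Fin n) (Fin n) (ZMod p), IsUnit M.det ∧
      ∀ i : ℕ, i ≤ p - 1 →
        (if i ≤ 2 * n then
          ((Finset.univ : Finset (Fin n)).val.map (fun j => oneSub R (Pi.single j (1 : ZMod p))) +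
            (Finset.univ : Finset (Fin n)).val.map (fun j => oneSub R (M j))).esymm (2 * n - i)
        else 0) = 0 := by
  simp only [forall_esymm_oneSub_eq_zero_iff, ← prod_oneSub_basisAndRows]
  constructor
  · rintro hzero ⟨n, -, M, hM, hσ⟩
    have hne : ∏ i, oneSub S (basisAndRows (bordered M) i) ≠ 0 :=
      (prod_oneSub_ne_zero_iff_exists_dual (N := p) _).mpr
        ⟨∑ j, LinearMap.proj j, fun i => by simp [sum_basisAndRows_bordered]⟩
    exact hne <| hzero (n + 1) n.succ_pos (bordered M) (by rwa [det_bordered])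
      (prod_oneSub_basisAndRows_bordered_eq_zero hσ)
  · intro hσ n hn M hM hzero
    by_contra hne
    obtain ⟨L, hL⟩ := (prod_oneSub_ne_zero_iff_exists_dual (N := p) _).mp hne
    exact hσ ⟨n, hn, affineRescale L M, isUnit_det_affineRescale hM hL,
      prod_oneSub_basisAndRows_affineRescale_eq_zero hL hzero⟩

/-- **Proposition (symmetric-function reformulation of Conjecture 2).** Let `p > 3` be
prime. The statement that for every `n ≥ 1` and every nonsingular matrix `M` the vanishing
of `∏ (1 - g^{e i}) * ∏ (1 - g^{a i})` in `F_p[F_p^n]` implies its vanishing in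
`ℤ[F_p^n]` is equivalent to the statement that there is no `n ≥ 1` and nonsingular matrix
`M` such that `σ_{2n-i}` of the `2n` elements `(1 - g^{e j}), (1 - g^{a j})` vanishes in
`F_p[F_p^n]` for every `0 ≤ i ≤ p - 1` (where `σ_j = 0` for `j < 0`). -/
theorem stmt_19 (p : ℕ) (hp : p.Prime) (hp3 : 3 < p) :
    (∀ n : ℕ, 1 ≤ n → ∀ M : Matrix (Fin n) (Fin n) (ZMod p), IsUnit M.det →
      ((∏ i : Fin n, ((1 : AddMonoidAlgebra (ZMod p) (Fin n → ZMod p)) -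
          AddMonoidAlgebra.single (Pi.single i 1) 1)) *
        (∏ i : Fin n, ((1 : AddMonoidAlgebra (ZMod p) (Fin n → ZMod p)) -
          AddMonoidAlgebra.single (M i) 1)) = 0) →
      ((∏ i : Fin n, ((1 : AddMonoidAlgebra ℤ (Fin n → ZMod p)) -
          AddMonoidAlgebra.single (Pi.single i 1) 1)) *
        (∏ i : Fin n, ((1 : AddMonoidAlgebra ℤ (Fin n → ZMod p)) -
          AddMonoidAlgebra.single (M i) 1)) = 0)) ↔
    (¬ ∃ n : ℕ, 1 ≤ n ∧ ∃ M : Matrix (Fin n) (Fin n) (ZMod p), IsUnit M.det ∧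
      ∀ i : ℕ, i ≤ p - 1 →
        (if i ≤ 2 * n then
          (((Finset.univ : Finset (Fin n)).val.map
              (fun j => (1 : AddMonoidAlgebra (ZMod p) (Fin n → ZMod p)) -
                AddMonoidAlgebra.single (Pi.single j 1) 1)) +
            ((Finset.univ : Finset (Fin n)).val.map
              (fun j => (1 : AddMonoidAlgebra (ZMod p) (Fin n → ZMod p)) -
                AddMonoidAlgebra.single (M j) 1))).esymm (2 * n - i)
        else 0) = 0) := by
  have : Fact p.Prime := ⟨hp⟩
  exact stmt_19_general p (ZMod p) ℤ
end
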